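/- arXiv:2111.11694 — 2 statements merged into one kernel-verified Lean document; each statement's English description precedes it below -/
import Mathlib

section
/- For every integer d ≥ 1 there exists a constant C_d > 0 depending only on d such that the following holds for every integer s with 1 ≤ s ≤ d. Let C^s(V) = {θ ∈ C(V) : (H^(2)θ)_i = 0 for every i ∈ I₀^(α), for every α ∈ {0,1}^d with |α| > s}, where |α| = Σ_k α_k. Fix integers n₁,…,n_d ≥ 2, reals σ > 0 and V > 0, a vector θ* ∈ C^s(V), and any map θ̂ : ℝ^{I₀} → ℝ^{I₀} such that for every y, θ̂(y) ∈ C^s(V) and ‖y − θ̂(y)‖₂ ≤ ‖y − θ‖₂ for all θ ∈ C^s(V) (the Euclidean projection onto the closed convex set C^s(V)). Then ∫ (1/n)·‖θ̂(θ* + ξ) − θ*‖₂² dμ_σ(ξ) ≤ C_d·(σ²V^{1/2}/n)^{4/5}·(log(2 + V·n^{1/2}/σ))^{3(2s−1)/5} + C_d·(σ²/n)·(log(2 + V·n^{1/2}/σ))^{3(2s−1)/4} + C_d·(σ²/n)·(log n)². -/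
open Finset MeasureTheory

/-- The discrete mixed difference `(D^(β)θ)_i` (with `ℕ`-valued multi-indices). -/
noncomputable def mixedDiff (d : ℕ) (β : Fin d → ℕ) (θ : (Fin d → ℕ) → ℝ)
    (i : Fin d → ℕ) : ℝ :=
  ∑ δ ∈ Fintype.piFinset (fun k => Finset.range (β k + 1)),
    (-1 : ℝ) ^ (∑ k, δ k) * (∏ k, ((β k).choose (δ k) : ℝ)) * θ (fun k => i k - δ k)

/-- The index set `I₀^(β)`. -/
def idxBeta (d : ℕ) (n β : Fin d → ℕ) : Finset (Fin d → ℕ) :=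
  Fintype.piFinset fun k =>
    if β k = Finset.univ.sup β then Finset.Ico (Finset.univ.sup β) (n k)
    else {β k}

/-- The complexity measure `V₂(θ)`. -/
noncomputable def V2 (d : ℕ) (n : Fin d → ℕ) (θ : (Fin d → ℕ) → ℝ) : ℝ :=
  ∑ β ∈ (Fintype.piFinset fun _ : Fin d => Finset.range 3).filter
      (fun β => Finset.univ.sup β = 2),
    (∏ k, (n k : ℝ) ^ (if β k = 2 then 1 else β k)) *
      ∑ i ∈ idxBeta d n β, |mixedDiff d β θ i|

/-- Extension of a vector indexed by `I₀ = Π_k {0,…,n_k-1}` to all of `ℕ^d` (by `0`). -/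
noncomputable def latExtend (d : ℕ) (n : Fin d → ℕ)
    (θ : (∀ k : Fin d, Fin (n k)) → ℝ) : (Fin d → ℕ) → ℝ :=
  fun j => if h : ∀ k, j k < n k then θ (fun k => ⟨j k, h k⟩) else 0

/-- The constraint set `C(V) = {θ : V₂(θ) ≤ V}`. -/
def Cset (d : ℕ) (n : Fin d → ℕ) (V : ℝ) : Set ((∀ k : Fin d, Fin (n k)) → ℝ) :=
  { θ | V2 d n (latExtend d n θ) ≤ V }

/-- The product Gaussian measure on `ℝ^{I₀}` with i.i.d. `N(0, σ²)` coordinates. -/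
noncomputable def gaussPi (d : ℕ) (n : Fin d → ℕ) (σ : ℝ) :
    Measure ((∀ k : Fin d, Fin (n k)) → ℝ) :=
  Measure.pi fun _ => ProbabilityTheory.gaussianReal 0 ⟨σ ^ 2, sq_nonneg σ⟩

/-- The operator `H^(2)`: `(H^(2)θ)_i = (D^(β)θ)_i` where `β_k = min(i_k, 2)`
(this uniformly covers both cases of the definition). -/
noncomputable def H2 (d : ℕ) (θ : (Fin d → ℕ) → ℝ) (i : Fin d → ℕ) : ℝ :=
  mixedDiff d (fun k => min (i k) 2) θ i

/-- The interaction-restricted constraint set `C^s(V)`. -/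
def CsSet (d : ℕ) (n : Fin d → ℕ) (s : ℕ) (V : ℝ) :
    Set ((∀ k : Fin d, Fin (n k)) → ℝ) :=
  { θ | V2 d n (latExtend d n θ) ≤ V ∧
      ∀ α : Fin d → ℕ, (∀ k, α k ≤ 1) → s < ∑ k, α k →
        ∀ i ∈ idxBeta d n α, H2 d (latExtend d n θ) i = 0 }

open ProbabilityTheory in
lemma gauss_exp {ι : Type*} [Fintype ι] (σ : ℝ) (v : NNReal) (hv : (v : ℝ) = σ ^ 2) (u : ι → ℝ) :
    Integrable (fun ξ : ι → ℝ => Real.exp (∑ i, u i * ξ i))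
      (Measure.pi fun _ : ι => gaussianReal 0 v) ∧
    ∫ ξ : ι → ℝ, Real.exp (∑ i, u i * ξ i)
      ∂(Measure.pi fun _ : ι => gaussianReal 0 v) =
      Real.exp (σ ^ 2 * (∑ i, u i ^ 2) / 2) := by
  have h1 : (fun ξ : ι → ℝ => Real.exp (∑ i, u i * ξ i)) =
      fun ξ => ∏ i, (fun x => Real.exp (u i * x)) (ξ i) := by
    funext ξ; simp [Real.exp_sum]
  rw [h1]
  constructor
  · exact Integrable.fintype_prod (f := fun i x => Real.exp (u i * x))
      (fun i => integrable_exp_mul_gaussianReal (u i))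
  · rw [integral_fintype_prod_eq_prod (fun i x => Real.exp (u i * x))]
    have : ∀ i, ∫ x, Real.exp (u i * x) ∂(gaussianReal 0 v)
        = Real.exp (σ ^ 2 * u i ^ 2 / 2) := by
      intro i
      have := congrFun (mgf_id_gaussianReal (μ := 0) (v := v)) (u i)
      simpa [mgf, hv] using this
    simp_rw [this]
    rw [← Real.exp_sum, Finset.mul_sum, Finset.sum_div]

lemma sq_le_two_exp (z : ℝ) : z ^ 2 ≤ 2 * (Real.exp z + Real.exp (-z)) := by
  have h := Real.quadratic_le_exp_of_nonneg (abs_nonneg z)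
  have h2 := abs_nonneg z
  rw [sq_abs] at h
  rcases abs_cases z with ⟨h3, _⟩ | ⟨h3, _⟩ <;> rw [h3] at h h2
  · have := Real.exp_pos (-z); linarith
  · have := Real.exp_pos z; linarith

lemma exp_half_le : Real.exp (1 / 2) ≤ 2 := by
  have h : Real.exp (1/2) ^ 2 = Real.exp 1 := by
    rw [← Real.exp_nat_mul]; norm_num
  have := Real.exp_one_lt_d9
  nlinarith [Real.exp_pos (1/2)]

/-- sum of two exponentials of a linear functional -/
noncomputable def expPair {ι : Type*} [Fintype ι] (u : ι → ℝ) (ξ : ι → ℝ) : ℝ :=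
  Real.exp (∑ i, u i * ξ i) + Real.exp (-(∑ i, u i * ξ i))

open ProbabilityTheory in
lemma expPair_int {ι : Type*} [Fintype ι] (σ : ℝ) (v : NNReal) (hv : (v : ℝ) = σ ^ 2) (u : ι → ℝ)
    (hu : σ ^ 2 * (∑ i, u i ^ 2) ≤ 1) :
    Integrable (expPair u)
      (Measure.pi fun _ : ι => gaussianReal 0 v) ∧
    ∫ ξ : ι → ℝ, expPair u ξ
      ∂(Measure.pi fun _ : ι => gaussianReal 0 v) ≤ 4 := by
  obtain ⟨a1, a2⟩ := gauss_exp σ v hv u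
  obtain ⟨b1, b2⟩ := gauss_exp σ v hv (fun i => - u i)
  simp only [neg_mul, Finset.sum_neg_distrib, neg_sq] at b1 b2
  refine ⟨a1.add b1, ?_⟩
  unfold expPair
  rw [integral_add a1 b1, a2, b2]
  have : Real.exp (σ ^ 2 * (∑ i, u i ^ 2) / 2) ≤ Real.exp (1/2) := by
    apply Real.exp_le_exp.2; linarith
  linarith [exp_half_le]

open ProbabilityTheory in
lemma stat_core {ι κ π μ β : Type*} [Fintype ι] [DecidableEq ι] [DecidableEq κ] (σ : ℝ) (hσ : 0 < σ)
    (v : NNReal) (hv : (v : ℝ) = σ ^ 2) (K : ℝ) (hK : 0 ≤ K)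
    (A : Finset κ) (a : κ → EuclideanSpace ℝ ι)
    (T : Finset π) (Mm : π → Finset μ) (Ψ : π → μ → EuclideanSpace ℝ ι)
    (s t : π → ℝ) (hs : ∀ p ∈ T, 0 < s p) (ht0 : ∀ p ∈ T, 0 ≤ t p) (ht : ∀ p ∈ T, ((Mm p).card : ℝ) ≤ Real.exp (t p))
    (hΨ : ∀ p ∈ T, ∀ m ∈ Mm p, σ * ‖Ψ p m‖ ≤ s p) :
    ∃ F : (ι → ℝ) → ℝ,
      Integrable F (Measure.pi fun _ : ι => gaussianReal 0 v) ∧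
      ∫ ξ, F ξ ∂(Measure.pi fun _ : ι => gaussianReal 0 v) ≤
        32 * σ ^ 2 * (A.card : ℝ) + 4 * K * ∑ p ∈ T, s p * (t p + 4) ∧
      ∀ (ξ : ι → ℝ) (η u : EuclideanSpace ℝ ι) (B : Finset β) (c : β → ℝ)
        (Λ : π → β → ℝ) (m : π → β → μ),
        ‖η‖ ^ 2 ≤ 2 * inner ℝ η (WithLp.toLp 2 ξ) →
        u ∈ Submodule.span ℝ (A.image a : Set (EuclideanSpace ℝ ι)) →
        η = u + ∑ j ∈ B, c j • ∑ p ∈ T, Λ p j • Ψ p (m p j) →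
        (∑ j ∈ B, |c j|) ≤ K → (∀ p ∈ T, ∀ j ∈ B, |Λ p j| ≤ 1) →
        (∀ p ∈ T, ∀ j ∈ B, m p j ∈ Mm p) → ‖η‖ ^ 2 ≤ F ξ := by
  classical
  set S := Submodule.span ℝ (A.image a : Set (EuclideanSpace ℝ ι)) with hS
  set ν := (Measure.pi fun _ : ι => gaussianReal 0 v) with hν
  have hinner : ∀ (u : EuclideanSpace ℝ ι) (ξ : ι → ℝ),
      inner ℝ u (WithLp.toLp 2 ξ) = ∑ i, u i * ξ i := by
    intro u ξ
    simp [PiLp.inner_apply, mul_comm]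
  have hdim : Module.finrank ℝ S ≤ A.card :=
    (finrank_span_finset_le_card (A.image a)).trans Finset.card_image_le
  let e := stdOrthonormalBasis ℝ S
  let R : EuclideanSpace ℝ ι → EuclideanSpace ℝ ι := fun v => v - S.starProjection v
  have hR : ∀ v, ‖R v‖ ≤ ‖v‖ := by
    intro v
    have : R v = Sᗮ.starProjection v := by
      simp [R, Submodule.starProjection_orthogonal]
    rw [this]
    exact Submodule.norm_starProjection_apply_le _ v
  let w1 : Fin (Module.finrank ℝ S) → ι → ℝ := fun b i => σ⁻¹ * (e b : EuclideanSpace ℝ ι) i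
  let w2 : π → μ → ι → ℝ := fun p m i => (s p)⁻¹ * (R (Ψ p m)) i
  have hw1 : ∀ b, σ ^ 2 * ∑ i, w1 b i ^ 2 ≤ 1 := by
    intro b
    have h1 : ‖(e b : EuclideanSpace ℝ ι)‖ = 1 := e.orthonormal.1 b
    have h2 : ∑ i, ((e b : EuclideanSpace ℝ ι) i) ^ 2 = 1 := by
      have := EuclideanSpace.real_norm_sq_eq (e b : EuclideanSpace ℝ ι)
      rw [h1] at this; simpa using this.symm
    simp only [w1, mul_pow, ← Finset.mul_sum, h2]
    field_simp; rfl
  have hw2 : ∀ p ∈ T, ∀ m ∈ Mm p, σ ^ 2 * ∑ i, w2 p m i ^ 2 ≤ 1 := by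
    intro p hp m hm
    have h2 := EuclideanSpace.real_norm_sq_eq (R (Ψ p m))
    simp only [w2, mul_pow, ← Finset.mul_sum, ← h2]
    have h3 : σ * ‖R (Ψ p m)‖ ≤ s p :=
      (mul_le_mul_of_nonneg_left (hR _) hσ.le).trans (hΨ p hp m hm)
    have h4 : (σ * ‖R (Ψ p m)‖) ^ 2 ≤ s p ^ 2 :=
      pow_le_pow_left₀ (by positivity) h3 2
    have h5 := hs p hp
    rw [inv_pow, ← mul_assoc, mul_comm (σ^2), mul_assoc, ← mul_pow]
    rw [inv_mul_le_iff₀ (by positivity)]; linarith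
  let W : π → (ι → ℝ) → ℝ := fun p ξ =>
    s p * (t p + Real.exp (-(t p)) * ∑ m ∈ Mm p, expPair (w2 p m) ξ)
  let F : (ι → ℝ) → ℝ := fun ξ =>
    4 * (∑ b, σ ^ 2 * (2 * expPair (w1 b) ξ)) + 4 * K * ∑ p ∈ T, W p ξ
  have I1 : ∀ b, Integrable (fun ξ => σ ^ 2 * (2 * expPair (w1 b) ξ)) ν := fun b =>
    ((expPair_int σ v hv (w1 b) (hw1 b)).1.const_mul 2).const_mul _
  have I2 : ∀ p ∈ T, Integrable (fun ξ => ∑ m ∈ Mm p, expPair (w2 p m) ξ) ν := fun p hp =>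
    integrable_finsetSum _ fun m hm => (expPair_int σ v hv (w2 p m) (hw2 p hp m hm)).1
  have I3 : ∀ p ∈ T, Integrable (W p) ν := fun p hp =>
    ((integrable_const _).add ((I2 p hp).const_mul _)).const_mul _
  have I4 : Integrable (fun ξ => ∑ b, σ ^ 2 * (2 * expPair (w1 b) ξ)) ν :=
    integrable_finsetSum _ fun b _ => I1 b
  have I5 : Integrable (fun ξ => ∑ p ∈ T, W p ξ) ν :=
    integrable_finsetSum _ fun p hp => I3 p hp
  refine ⟨F, (I4.const_mul _).add (I5.const_mul _), ?_, ?_⟩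
  · have e1 : ∫ ξ, ∑ b, σ ^ 2 * (2 * expPair (w1 b) ξ) ∂ν ≤ 8 * σ ^ 2 * A.card := by
      rw [integral_finsetSum _ fun b _ => I1 b]
      calc _ ≤ ∑ b : Fin (Module.finrank ℝ S), 8 * σ ^ 2 := by
            apply Finset.sum_le_sum
            intro b _
            rw [integral_const_mul, integral_const_mul]
            have := (expPair_int σ v hv (w1 b) (hw1 b)).2
            have h := sq_nonneg σ
            nlinarith
        _ = 8 * σ ^ 2 * (Module.finrank ℝ S : ℝ) := by simp; ring
        _ ≤ _ := by
            have : (Module.finrank ℝ S : ℝ) ≤ A.card := by exact_mod_cast hdim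
            gcongr
    have e2 : ∫ ξ, ∑ p ∈ T, W p ξ ∂ν ≤ ∑ p ∈ T, s p * (t p + 4) := by
      rw [integral_finsetSum _ fun p hp => I3 p hp]
      apply Finset.sum_le_sum
      intro p hp
      simp only [W]
      rw [integral_const_mul, integral_add (integrable_const _) ((I2 p hp).const_mul _),
        integral_const_mul, integral_finsetSum _ fun m hm => (expPair_int σ v hv (w2 p m) (hw2 p hp m hm)).1]
      have h1 : ∑ m ∈ Mm p, ∫ ξ, expPair (w2 p m) ξ ∂ν ≤ ∑ m ∈ Mm p, (4:ℝ) :=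
        Finset.sum_le_sum fun m hm => (expPair_int σ v hv (w2 p m) (hw2 p hp m hm)).2
      have h2 : Real.exp (-(t p)) * ∑ m ∈ Mm p, ∫ ξ, expPair (w2 p m) ξ ∂ν ≤ 4 := by
        calc _ ≤ Real.exp (-(t p)) * ∑ m ∈ Mm p, (4:ℝ) := by gcongr
          _ = Real.exp (-(t p)) * (Mm p).card * 4 := by simp; ring
          _ ≤ Real.exp (-(t p)) * Real.exp (t p) * 4 := by
              have := ht p hp; gcongr
          _ = 4 := by rw [← Real.exp_add]; simp
      have h3 := hs p hp
      simp only [integral_const, probReal_univ, one_smul]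
      gcongr
    simp only [F]
    rw [integral_add (I4.const_mul _) (I5.const_mul _), integral_const_mul, integral_const_mul]
    have := mul_le_mul_of_nonneg_left e2 (by positivity : 0 ≤ 4 * K)
    linarith
  · intro ξ η u B c Λ m hbasic hu hη hc hΛ hm
    set x : EuclideanSpace ℝ ι := WithLp.toLp 2 ξ with hx
    have hRx : ∀ v, inner ℝ (R v) x = inner ℝ v (R x) := by
      intro v
      simp only [R, inner_sub_left, inner_sub_right]
      congr 1
      exact Submodule.inner_starProjection_left_eq_right S v x
    have hP : ‖S.starProjection x‖ ^ 2 ≤ ∑ b, σ ^ 2 * (2 * expPair (w1 b) ξ) := by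
      have h1 : ‖S.starProjection x‖ = ‖S.orthogonalProjectionOnto x‖ := by
        rw [Submodule.starProjection_apply]; rfl
      rw [h1, ← e.sum_sq_norm_inner_right]
      apply Finset.sum_le_sum
      intro b _
      have h2 : inner ℝ (e b) (S.orthogonalProjectionOnto x) = inner ℝ (e b : EuclideanSpace ℝ ι) x := by
        exact Submodule.inner_orthogonalProjectionOnto_eq_of_mem_left (e b) x
      rw [h2, hinner, Real.norm_eq_abs, sq_abs]
      have h3 := sq_le_two_exp (∑ i, w1 b i * ξ i)
      have h4 : ∑ i, (e b : EuclideanSpace ℝ ι) i * ξ i = σ * ∑ i, w1 b i * ξ i := by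
        simp only [w1, Finset.mul_sum]
        apply Finset.sum_congr rfl
        intro i _
        field_simp
      rw [h4, mul_pow]
      exact mul_le_mul_of_nonneg_left h3 (sq_nonneg σ)
    have hZ : ∀ p ∈ T, ∀ m ∈ Mm p, |inner ℝ (R (Ψ p m)) x| ≤ W p ξ := by
      intro p hp m hm
      have h5 := hs p hp
      rw [hinner]
      have h4 : ∑ i, (R (Ψ p m)) i * ξ i = s p * ∑ i, w2 p m i * ξ i := by
        simp only [w2, Finset.mul_sum]
        apply Finset.sum_congr rfl
        intro i _
        field_simp
      rw [h4, abs_mul, abs_of_pos h5]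
      apply mul_le_mul_of_nonneg_left _ h5.le
      set z := ∑ i, w2 p m i * ξ i with hz
      have h6 : Real.exp |z| ≤ expPair (w2 p m) ξ := by
        unfold expPair
        rw [← hz]
        rcases abs_cases z with ⟨h3, _⟩ | ⟨h3, _⟩ <;> rw [h3]
        · have := Real.exp_pos (-z); linarith
        · have := Real.exp_pos z; linarith
      have h7 : expPair (w2 p m) ξ ≤ ∑ m ∈ Mm p, expPair (w2 p m) ξ := by
        apply Finset.single_le_sum (f := fun m => expPair (w2 p m) ξ) _ hm
        intro i _; unfold expPair; positivity
      have h8 : |z| - t p ≤ Real.exp (-(t p)) * Real.exp |z| := by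
        rw [← Real.exp_add]
        have := Real.add_one_le_exp (-(t p) + |z|)
        linarith
      have h9 : Real.exp (-(t p)) * Real.exp |z| ≤
        Real.exp (-(t p)) * ∑ m ∈ Mm p, expPair (w2 p m) ξ := by
        have := h6.trans h7; gcongr
      linarith
    have hW0 : ∀ p ∈ T, 0 ≤ W p ξ := by
      intro p hp
      have h1 := hs p hp
      have h2 := ht0 p hp
      have : 0 ≤ ∑ m ∈ Mm p, expPair (w2 p m) ξ :=
        Finset.sum_nonneg fun m _ => by unfold expPair; positivity
      simp only [W]; positivity
    -- split
    have hsplit : inner ℝ η x = inner ℝ η (S.starProjection x) + inner ℝ η (R x) := by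
      rw [← inner_add_right]; simp [R]
    have hRu : inner ℝ u (R x) = 0 := by
      rw [real_inner_comm]
      exact Submodule.starProjection_inner_eq_zero x u hu
    have hsec : inner ℝ η (R x) ≤ K * ∑ p ∈ T, W p ξ := by
        have hZ0 : 0 ≤ ∑ p ∈ T, W p ξ := Finset.sum_nonneg fun p hp => hW0 p hp
        rw [hη, inner_add_left, hRu, zero_add, sum_inner]
        calc _ ≤ ∑ j ∈ B, |c j| * ∑ p ∈ T, W p ξ := by
              apply Finset.sum_le_sum
              intro j hj
              rw [real_inner_smul_left]
              refine (le_abs_self _).trans ?_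
              rw [abs_mul]
              apply mul_le_mul_of_nonneg_left _ (abs_nonneg _)
              rw [sum_inner]
              refine (Finset.abs_sum_le_sum_abs _ _).trans ?_
              apply Finset.sum_le_sum
              intro p hp
              rw [real_inner_smul_left, abs_mul, ← hRx]
              have h1 := hZ p hp _ (hm p hp j hj)
              have h2 := hΛ p hp j hj
              nlinarith [abs_nonneg (Λ p j), abs_nonneg (inner ℝ (R (Ψ p (m p j))) x)]
          _ = (∑ j ∈ B, |c j|) * ∑ p ∈ T, W p ξ := by rw [Finset.sum_mul]
          _ ≤ _ := by gcongr
    have hfst : inner ℝ η (S.starProjection x) ≤ ‖η‖ * ‖S.starProjection x‖ :=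
      real_inner_le_norm _ _
    simp only [F]
    nlinarith [sq_nonneg (‖η‖ - 2 * ‖S.starProjection x‖)]
/-- hinge with knot `t` -/
noncomputable def hinge (n t i : ℕ) : ℝ := ((i - t : ℕ) : ℝ) / n

/-- normalized one dimensional basis functions -/
noncomputable def gfun (n j i : ℕ) : ℝ := if j = 0 then 1 else hinge n (j - 1) i

/-- the tent at level with half width `w` and index `q` -/
noncomputable def tent (n w q i : ℕ) : ℝ :=
  hinge n (2 * w * q + w) i - (hinge n (2 * w * q) i + hinge n (2 * w * q + 2 * w) i) / 2

lemma tent_abs (n w q i : ℕ) (hn : 0 < n) : |tent n w q i| ≤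
    if i ∈ Finset.Ico (2 * w * q) (2 * w * q + 2 * w) then (w : ℝ) / n else 0 := by
  have hn' : (0:ℝ) < n := by exact_mod_cast hn
  unfold tent hinge
  generalize 2 * w * q = a
  have e : ((i - (a + w) : ℕ) : ℝ) / n - (((i - a : ℕ) : ℝ) / n + ((i - (a + 2 * w) : ℕ) : ℝ) / n) / 2
      = (((i - (a + w) : ℕ) : ℝ) - (((i - a : ℕ) : ℝ) + ((i - (a + 2 * w) : ℕ) : ℝ)) / 2) / n := by
    field_simp
  rw [e, abs_div, abs_of_pos hn']
  split_ifs with hi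
  · rw [Finset.mem_Ico] at hi
    apply div_le_div_of_nonneg_right _ hn'.le
    rcases le_total (a + w) i with h | h
    · have h1 : ((i - (a + w) : ℕ) : ℝ) + w = ((i - a : ℕ) : ℝ) := by
        exact_mod_cast (by omega : i - (a + w) + w = i - a)
      have h2 : ((i - (a + w) : ℕ) : ℝ) ≤ w := by
        exact_mod_cast (by omega : i - (a + w) ≤ w)
      have h3 : (0:ℝ) ≤ ((i - (a + w) : ℕ) : ℝ) := by positivity
      rw [Nat.sub_eq_zero_of_le (by omega : i ≤ a + 2 * w), abs_le]
      push_cast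
      constructor <;> linarith
    · have h2 : ((i - a : ℕ) : ℝ) ≤ w := by
        exact_mod_cast (by omega : i - a ≤ w)
      have h3 : (0:ℝ) ≤ ((i - a : ℕ) : ℝ) := by positivity
      rw [Nat.sub_eq_zero_of_le (by omega : i ≤ a + 2 * w), Nat.sub_eq_zero_of_le h, abs_le]
      push_cast
      constructor <;> linarith
  · rw [Finset.mem_Ico] at hi
    rcases lt_or_ge i a with h | h
    · rw [Nat.sub_eq_zero_of_le (by omega : i ≤ a + 2 * w), Nat.sub_eq_zero_of_le (by omega : i ≤ a + w),
        Nat.sub_eq_zero_of_le h.le]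
      simp
    · obtain ⟨r, rfl⟩ : ∃ r, i = a + 2 * w + r := ⟨i - (a + 2 * w), by omega⟩
      rw [show a + 2 * w + r - (a + w) = w + r by omega, show a + 2 * w + r - a = 2 * w + r by omega,
        show a + 2 * w + r - (a + 2 * w) = r by omega]
      push_cast
      rw [show (w:ℝ) + r - (2 * w + r + r) / 2 = 0 by ring]
      simp

lemma tent_sq (n w q : ℕ) (hn : 0 < n) :
    ∑ i ∈ Finset.range n, tent n w q i ^ 2 ≤ 2 * (w : ℝ) ^ 3 / n ^ 2 := by
  have h1 : ∀ i ∈ Finset.range n, tent n w q i ^ 2 ≤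
      if i ∈ Finset.Ico (2 * w * q) (2 * w * q + 2 * w) then ((w : ℝ) / n) ^ 2 else 0 := by
    intro i _
    have h := tent_abs n w q i hn
    split_ifs at h ⊢ with hi
    · rw [← sq_abs]; exact pow_le_pow_left₀ (abs_nonneg _) h 2
    · have : tent n w q i = 0 := abs_nonpos_iff.1 h
      simp [this]
  refine (Finset.sum_le_sum h1).trans ?_
  rw [← Finset.sum_filter, Finset.sum_const, nsmul_eq_mul]
  have h2 : ((Finset.range n).filter (fun i => i ∈ Finset.Ico (2 * w * q) (2 * w * q + 2 * w))).card
      ≤ 2 * w := by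
    calc _ ≤ (Finset.Ico (2 * w * q) (2 * w * q + 2 * w)).card := by
          apply Finset.card_le_card
          intro i hi; exact (Finset.mem_filter.1 hi).2
      _ = _ := by simp
  have h3 : (((Finset.range n).filter (fun i => i ∈ Finset.Ico (2 * w * q) (2 * w * q + 2 * w))).card : ℝ)
      ≤ 2 * w := by exact_mod_cast h2
  calc _ ≤ 2 * (w:ℝ) * ((w : ℝ) / n) ^ 2 := by gcongr
    _ = _ := by ring

/-- interpolation with step `w` -/
noncomputable def interp (n w t i : ℕ) : ℝ :=
  (1 - ((t % w : ℕ) : ℝ) / w) * hinge n (w * (t / w)) i +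
    ((t % w : ℕ) : ℝ) / w * hinge n (w * (t / w) + w) i

/-- coefficient of the tent -/
noncomputable def tcoef (w t : ℕ) : ℝ :=
  if t % (2 * w) < w then ((t % (2 * w) : ℕ) : ℝ) / w else 1 - ((t % (2 * w) : ℕ) - w : ℝ) / w

lemma tcoef_abs (w t : ℕ) (hw : 0 < w) : |tcoef w t| ≤ 1 := by
  have hw' : (0:ℝ) < w := by exact_mod_cast hw
  have h := Nat.mod_lt t (by omega : 0 < 2 * w)
  have h' : ((t % (2 * w) : ℕ) : ℝ) < 2 * w := by exact_mod_cast h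
  unfold tcoef
  split_ifs with h1
  · have h1' : ((t % (2 * w) : ℕ) : ℝ) < w := by exact_mod_cast h1
    rw [abs_of_nonneg (by positivity), div_le_one hw']; linarith
  · have h1' : (w : ℝ) ≤ ((t % (2 * w) : ℕ) : ℝ) := by exact_mod_cast not_lt.1 h1
    have h2 : 0 ≤ ((t % (2 * w) : ℕ) - w : ℝ) / w := div_nonneg (by linarith) hw'.le
    have h3 : ((t % (2 * w) : ℕ) - w : ℝ) / w ≤ 1 := by rw [div_le_one hw']; linarith
    rw [abs_le]; constructor <;> linarith

lemma interp_step (n w t i : ℕ) (hw : 0 < w) :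
    interp n w t i - interp n (2 * w) t i = tcoef w t * tent n w (t / (2 * w)) i := by
  have hw' : (0:ℝ) < w := by exact_mod_cast hw
  have hr := Nat.mod_lt t (by omega : 0 < 2 * w)
  have ht := Nat.div_add_mod t (2 * w)
  unfold interp tcoef tent
  generalize hq : t / (2 * w) = q at *
  generalize hrr : t % (2 * w) = r at *
  split_ifs with h1
  · have e1 : t / w = 2 * q := by
      rw [← ht, mul_assoc, mul_left_comm, Nat.mul_add_div hw, Nat.div_eq_of_lt h1]; omega
    have e2 : t % w = r := by
      rw [← ht, mul_assoc, mul_left_comm, Nat.mul_add_mod, Nat.mod_eq_of_lt h1]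
    rw [e1, e2, show w * (2 * q) = 2 * w * q by ring]
    push_cast
    field_simp
    ring
  · have h1 := not_lt.1 h1
    obtain ⟨r', rfl⟩ := Nat.exists_eq_add_of_le h1
    have h2 : r' < w := by omega
    have ht' : w * (2 * q + 1) + r' = t := by rw [← ht]; ring
    have e1 : t / w = 2 * q + 1 := by
      rw [← ht', Nat.mul_add_div hw, Nat.div_eq_of_lt h2, add_zero]
    have e2 : t % w = r' := by
      rw [← ht', Nat.mul_add_mod, Nat.mod_eq_of_lt h2]
    rw [e1, e2, show w * (2 * q + 1) = 2 * w * q + w by ring,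
      show 2 * w * q + w + w = 2 * w * q + 2 * w by ring]
    push_cast
    field_simp
    ring

lemma oneD (n : ℕ) (hn : 2 ≤ n) : ∃ (P : ℕ) (ψ : ℕ → ℕ → ℕ → ℝ) (lam : ℕ → ℕ → ℝ)
    (m : ℕ → ℕ → ℕ),
    (∀ p ∈ Finset.range (P + 1), ∀ j < n, |lam p j| ≤ 1) ∧
    (∀ p ∈ Finset.range (P + 1), ∀ j < n, m p j < 2 ^ (p + 1)) ∧
    (∀ p, 1 ≤ p → ∀ j < 2, lam p j = 0) ∧
    (∀ p ∈ Finset.range (P + 1), ∀ q, ∑ i ∈ Finset.range n, ψ p q i ^ 2 ≤ 64 * n * (1 / 8) ^ p) ∧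
    ∀ j < n, ∀ i < n, gfun n j i = ∑ p ∈ Finset.range (P + 1), lam p j * ψ p (m p j) i := by
  have hn' : (0:ℝ) < n := by exact_mod_cast (by omega : 0 < n)
  set P := Nat.clog 2 n with hP
  have hP1 : n ≤ 2 ^ P := Nat.le_pow_clog (by norm_num) n
  have hP2 : 2 ^ P ≤ 2 * n := by
    have h1 := Nat.pow_pred_clog_lt_self (b := 2) (by norm_num) (x := n) (by omega)
    have h2 : 0 < P := Nat.clog_pos (by norm_num) hn
    rw [← hP] at h1
    obtain ⟨k, hk⟩ : ∃ k, P = k + 1 := ⟨P - 1, by omega⟩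
    rw [hk] at h1 ⊢
    simp at h1
    rw [pow_succ]; omega
  refine ⟨P, fun p q i => if p = 0 then (if q = 0 then hinge n 0 i else 1) else
      tent n (2 ^ (P - p)) q i,
    fun p j => if p = 0 then (if j = 0 then 1 else 1 - ((j - 1 : ℕ) : ℝ) / (2 ^ P : ℕ)) else
      (if j = 0 then 0 else tcoef (2 ^ (P - p)) (j - 1)),
    fun p j => if p = 0 then (if j = 0 then 1 else 0) else
      (j - 1) / (2 * 2 ^ (P - p)), ?_, ?_, ?_, ?_, ?_⟩
  · intro p _ j hj
    dsimp only
    split_ifs with h1 h2 h3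
    · simp
    · have h4 : ((j - 1 : ℕ) : ℝ) / (2 ^ P : ℕ) ≤ 1 := by
        rw [div_le_one (by positivity)]
        exact_mod_cast (by omega : j - 1 ≤ 2 ^ P)
      have h5 : 0 ≤ ((j - 1 : ℕ) : ℝ) / (2 ^ P : ℕ) := by positivity
      rw [abs_le]; constructor <;> linarith
    · simp
    · exact tcoef_abs _ _ (by positivity)
  · intro p hp j hj
    dsimp only
    split_ifs with h1 h2
    · simp [h1]
    · simp [h1]
    · rw [Nat.div_lt_iff_lt_mul (by positivity)]
      have hp := Finset.mem_range.1 hp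
      have : 2 ^ (p + 1) * (2 * 2 ^ (P - p)) = 4 * 2 ^ P := by
        rw [show P = p + (P - p) by omega, pow_succ, pow_add]
        simp; ring
      rw [this]; omega
  · intro p hp j hj
    dsimp only
    rw [if_neg (by omega)]
    split_ifs with h
    · rfl
    · have : j = 1 := by omega
      subst this
      simp [tcoef]
  · intro p hp q
    dsimp only
    split_ifs with h1 h2
    · subst h1
      have : ∀ i ∈ Finset.range n, hinge n 0 i ^ 2 ≤ 1 := by
        intro i hi
        have hi := Finset.mem_range.1 hi
        unfold hinge
        apply pow_le_one₀ (by positivity)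
        rw [div_le_one hn']
        exact_mod_cast (by omega : i - 0 ≤ n)
      refine (Finset.sum_le_sum this).trans ?_
      simp; linarith
    · subst h1; simp; linarith
    · refine (tent_sq n _ q (by omega)).trans ?_
      have hp := Finset.mem_range.1 hp
      have hw : ((2 ^ (P - p) : ℕ) : ℝ) * 2 ^ p ≤ 2 * n := by
        have : 2 ^ (P - p) * 2 ^ p = 2 ^ P := by rw [← pow_add]; congr 1; omega
        have : 2 ^ (P - p) * 2 ^ p ≤ 2 * n := by omega
        exact_mod_cast this
      have hw0 : (0:ℝ) ≤ ((2 ^ (P - p) : ℕ) : ℝ) := by positivity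
      generalize ((2 ^ (P - p) : ℕ) : ℝ) = w at hw hw0 ⊢
      have h3 := pow_le_pow_left₀ (by positivity) hw 3
      have h8 : ((2:ℝ) ^ p) ^ 3 = 8 ^ p := by
        rw [← pow_mul, mul_comm, pow_mul]; norm_num
      rw [mul_pow, h8] at h3
      rw [one_div, inv_pow, ← div_eq_mul_inv, div_le_div_iff₀ (by positivity) (by positivity)]
      have : (0:ℝ) < (n:ℝ) ^ 3 := by positivity
      nlinarith
  · intro j hj i hi
    by_cases h0 : j = 0
    · subst h0
      rw [Finset.sum_range_succ']
      simp [gfun]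
    · have hs : gfun n j i = hinge n (j - 1) i := by simp [gfun, h0]
      rw [hs, Finset.sum_range_succ']
      simp only [Nat.add_eq_zero_iff, one_ne_zero, and_false, if_false, h0, if_true]
      have e : ∀ p ∈ Finset.range P, tcoef (2 ^ (P - (p + 1))) (j - 1) *
          tent n (2 ^ (P - (p + 1))) ((j - 1) / (2 * 2 ^ (P - (p + 1)))) i =
          interp n (2 ^ (P - (p + 1))) (j - 1) i - interp n (2 ^ (P - p)) (j - 1) i := by
        intro p hp
        have hp := Finset.mem_range.1 hp
        rw [← interp_step n _ _ _ (by positivity), ← pow_succ',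
          show P - (p + 1) + 1 = P - p by omega]
      rw [Finset.sum_congr rfl e,
        Finset.sum_range_sub (fun p => interp n (2 ^ (P - p)) (j - 1) i)]
      have hlt : j - 1 < 2 ^ P := by omega
      have hz : hinge n (2 ^ P) i = 0 := by
        unfold hinge
        rw [Nat.sub_eq_zero_of_le (by omega)]; simp
      simp [interp, Nat.mod_one, Nat.mod_eq_of_lt hlt, Nat.div_eq_of_lt hlt, hz]
/-- unnormalized one dimensional basis functions -/
noncomputable def phi (j i : ℕ) : ℝ := if j = 0 then 1 else ((i - (j - 1) : ℕ) : ℝ)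

/-- one dimensional differences -/
noncomputable def D1 (f : ℕ → ℝ) (j : ℕ) : ℝ :=
  ∑ δ ∈ Finset.range (min j 2 + 1), (-1 : ℝ) ^ δ * ((min j 2).choose δ : ℝ) * f (j - δ)

lemma D1_zero (f : ℕ → ℝ) : D1 f 0 = f 0 := by simp [D1]

lemma D1_one (f : ℕ → ℝ) : D1 f 1 = f 1 - f 0 := by
  simp [D1, Finset.sum_range_succ]; ring

lemma D1_two (f : ℕ → ℝ) (j : ℕ) : D1 f (j + 2) = f (j + 2) - 2 * f (j + 1) + f j := by
  simp [D1, Finset.sum_range_succ]; ring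

lemma rep_aux (f : ℕ → ℝ) (i : ℕ) :
    ∑ j ∈ Finset.range i, D1 f (j + 2) = f (i + 1) - f i - (f 1 - f 0) := by
  induction i with
  | zero => simp
  | succ i ih => rw [Finset.sum_range_succ, ih, D1_two]; ring

lemma rep_aux2 (f : ℕ → ℝ) (i : ℕ) :
    ∑ j ∈ Finset.range i, D1 f (j + 2) * ((i - (j + 1) : ℕ) : ℝ) = f i - f 0 - i * (f 1 - f 0) := by
  induction i with
  | zero => simp
  | succ i ih =>
    have h : ∀ j ∈ Finset.range (i + 1), D1 f (j + 2) * ((i + 1 - (j + 1) : ℕ) : ℝ) =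
        D1 f (j + 2) * ((i - (j + 1) : ℕ) : ℝ) + (if j < i then D1 f (j + 2) else 0) := by
      intro j hj
      have := Finset.mem_range.1 hj
      split_ifs with h
      · rw [show i + 1 - (j + 1) = i - (j + 1) + 1 by omega]; push_cast; ring
      · rw [show i + 1 - (j + 1) = 0 by omega, show i - (j + 1) = 0 by omega]; simp
    rw [Finset.sum_congr rfl h, Finset.sum_add_distrib, Finset.sum_range_succ, ih,
      Finset.sum_range_succ]
    have h2 : ∑ j ∈ Finset.range i, (if j < i then D1 f (j + 2) else 0) =
        ∑ j ∈ Finset.range i, D1 f (j + 2) :=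
      Finset.sum_congr rfl fun j hj => by simp [Finset.mem_range.1 hj]
    rw [h2, rep_aux]
    simp
    ring

lemma rep1 (f : ℕ → ℝ) (n i : ℕ) (hn : 2 ≤ n) (hi : i < n) :
    ∑ j ∈ Finset.range n, D1 f j * phi j i = f i := by
  obtain ⟨N, rfl⟩ : ∃ N, n = N + 2 := ⟨n - 2, by omega⟩
  rw [Finset.sum_range_succ', Finset.sum_range_succ', D1_zero, D1_one]
  have h : ∑ j ∈ Finset.range N, D1 f (j + 1 + 1) * phi (j + 1 + 1) i =
      ∑ j ∈ Finset.range i, D1 f (j + 2) * ((i - (j + 1) : ℕ) : ℝ) := by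
    rcases le_total i N with h | h
    · symm
      apply Finset.sum_subset_zero_on_sdiff (Finset.range_subset_range.2 h)
      · intro j hj
        simp at hj
        simp [phi]
        right; omega
      · intro j hj; simp [phi]
    · apply Finset.sum_subset_zero_on_sdiff (Finset.range_subset_range.2 h)
      · intro j hj
        simp at hj
        simp
        right; omega
      · intro j hj; simp [phi]
  rw [h, rep_aux2]
  simp [phi]
  ring

lemma rep (d : ℕ) (n : Fin d → ℕ) (hn : ∀ k, 2 ≤ n k) (θ : (Fin d → ℕ) → ℝ) (i : Fin d → ℕ)
    (hi : ∀ k, i k < n k) :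
    θ i = ∑ j ∈ Fintype.piFinset (fun k => Finset.range (n k)),
      H2 d θ j * ∏ k, phi (j k) (i k) := by
  classical
  have h1 : ∀ j ∈ Fintype.piFinset (fun k => Finset.range (n k)), H2 d θ j =
      ∑ l ∈ Fintype.piFinset (fun k => Finset.range (n k)), θ l *
        ∏ k, D1 (fun x => if x = l k then 1 else 0) (j k) := by
    intro j hj
    have hj : ∀ k, j k < n k := by simpa [Fintype.mem_piFinset] using hj
    unfold H2 mixedDiff D1
    simp_rw [Finset.prod_univ_sum, Finset.mul_sum]
    rw [Finset.sum_comm]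
    apply Finset.sum_congr rfl
    intro δ _
    rw [Finset.sum_eq_single (fun k => j k - δ k)]
    · simp [Finset.prod_mul_distrib, Finset.prod_pow_eq_pow_sum]; ring
    · intro l _ hl
      have : ∃ k, j k - δ k ≠ l k := by
        by_contra hcon; push Not at hcon; exact hl (funext fun k => (hcon k).symm)
      obtain ⟨k, hk⟩ := this
      rw [Finset.prod_eq_zero (Finset.mem_univ k)]
      · simp
      · simp [hk]
    · intro h
      exfalso; apply h
      simp only [Fintype.mem_piFinset, Finset.mem_range]
      intro k; have := hj k; omega
  rw [Finset.sum_congr rfl fun j hj => by rw [h1 j hj]]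
  simp_rw [Finset.sum_mul]
  rw [Finset.sum_comm]
  simp_rw [mul_assoc, ← Finset.mul_sum, ← Finset.prod_mul_distrib]
  have h2 : ∀ l : Fin d → ℕ, ∑ j ∈ Fintype.piFinset (fun k => Finset.range (n k)),
      ∏ k, D1 (fun x => if x = l k then 1 else 0) (j k) * phi (j k) (i k) =
      ∏ k, if i k = l k then 1 else 0 := by
    intro l
    rw [← Finset.prod_univ_sum (fun k => Finset.range (n k))
      (fun k x => D1 (fun x => if x = l k then 1 else 0) x * phi x (i k))]
    apply Finset.prod_congr rfl
    intro k _
    exact rep1 _ (n k) (i k) (hn k) (hi k)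
  simp_rw [h2]
  rw [Finset.sum_eq_single i]
  · simp
  · intro l _ hl
    have : ∃ k, i k ≠ l k := by
      by_contra hcon; push Not at hcon; exact hl (funext fun k => (hcon k).symm)
    obtain ⟨k, hk⟩ := this
    rw [Finset.prod_eq_zero (Finset.mem_univ k)]
    · simp
    · simp [hk]
  · intro h
    exfalso; apply h
    simpa [Fintype.mem_piFinset] using hi

lemma phi_gfun (n j i : ℕ) (hn : 2 ≤ n) :
    phi j i = (n : ℝ) ^ (if j = 0 then 0 else 1) * gfun n j i := by
  unfold phi gfun hinge
  have : (n:ℝ) ≠ 0 := by positivity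
  split_ifs <;> simp
  field_simp

/-- normalized coefficient -/
noncomputable def coef (d : ℕ) (n : Fin d → ℕ) (θ : (Fin d → ℕ) → ℝ) (j : Fin d → ℕ) : ℝ :=
  H2 d θ j * ∏ k, (n k : ℝ) ^ (if j k = 0 then 0 else 1)

lemma rep' (d : ℕ) (n : Fin d → ℕ) (hn : ∀ k, 2 ≤ n k) (θ : (Fin d → ℕ) → ℝ) (i : Fin d → ℕ)
    (hi : ∀ k, i k < n k) :
    θ i = ∑ j ∈ Fintype.piFinset (fun k => Finset.range (n k)),
      coef d n θ j * ∏ k, gfun (n k) (j k) (i k) := by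
  rw [rep d n hn θ i hi]
  apply Finset.sum_congr rfl
  intro j _
  unfold coef
  rw [mul_assoc, ← Finset.prod_mul_distrib]
  congr 1
  apply Finset.prod_congr rfl
  intro k _
  exact phi_gfun _ _ _ (hn k)

lemma coef_sum (d : ℕ) (n : Fin d → ℕ) (θ : (Fin d → ℕ) → ℝ) :
    ∑ j ∈ (Fintype.piFinset (fun k => Finset.range (n k))).filter (fun j => ∃ k, 2 ≤ j k),
      |coef d n θ j| ≤ V2 d n θ := by
  classical
  unfold V2
  rw [← Finset.sum_fiberwise_of_maps_to (g := fun j k => min (j k) 2)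
    (t := (Fintype.piFinset fun _ : Fin d => Finset.range 3).filter
      (fun β => Finset.univ.sup β = 2))]
  · apply Finset.sum_le_sum
    intro β hβ
    have hsup : Finset.univ.sup β = 2 := (Finset.mem_filter.1 hβ).2
    rw [Finset.mul_sum]
    refine (Finset.sum_le_sum (g := fun j => (∏ k, (n k : ℝ) ^ (if β k = 2 then 1 else β k)) *
      |mixedDiff d β θ j|) ?_).trans ?_
    · intro j hj
      have hj2 := (Finset.mem_filter.1 hj).2
      unfold coef H2
      rw [hj2, abs_mul, mul_comm, abs_of_nonneg (by positivity)]
      apply le_of_eq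
      congr 1
      apply Finset.prod_congr rfl
      intro k _
      congr 1
      rw [← hj2]
      dsimp only
      split_ifs <;> omega
    · apply Finset.sum_le_sum_of_subset_of_nonneg
      · intro j hj
        simp only [Finset.mem_filter, Fintype.mem_piFinset, Finset.mem_range] at hj
        obtain ⟨⟨hj1, _⟩, hj3⟩ := hj
        unfold idxBeta
        rw [Fintype.mem_piFinset]
        intro k
        rw [hsup]
        have := hj1 k
        have h3 := congrFun hj3 k
        split_ifs with h
        · rw [Finset.mem_Ico]; omega
        · rw [Finset.mem_singleton]; omega
      · intro j _ _; positivity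
  · intro j hj
    simp only [Finset.mem_filter, Fintype.mem_piFinset, Finset.mem_range] at hj ⊢
    obtain ⟨hj1, k, hk⟩ := hj
    refine ⟨fun k => by omega, ?_⟩
    apply le_antisymm
    · apply Finset.sup_le; intro k _; exact min_le_right _ _
    · have := Finset.le_sup (f := fun k => min (j k) 2) (Finset.mem_univ k)
      omega

lemma coef_zero (d s : ℕ) (n : Fin d → ℕ) (hs : 1 ≤ s) (V : ℝ) (θ : (∀ k : Fin d, Fin (n k)) → ℝ)
    (hθ : θ ∈ CsSet d n s V) (j : Fin d → ℕ)
    (hj : j ∈ Fintype.piFinset (fun k => Finset.range (n k)))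
    (hsupp : s < (Finset.univ.filter (fun k => j k ≠ 0)).card) :
    coef d n (latExtend d n θ) j = 0 := by
  unfold coef
  have hj : ∀ k, j k < n k := by simpa [Fintype.mem_piFinset] using hj
  rw [hθ.2 (fun k => if j k ≠ 0 then 1 else 0) (fun k => by split_ifs <;> omega), zero_mul]
  · rw [Finset.card_filter] at hsupp; exact hsupp
  · have hsup : Finset.univ.sup (fun k => if j k ≠ 0 then 1 else 0) = 1 := by
      apply le_antisymm
      · apply Finset.sup_le; intro k _; split_ifs <;> omega
      · obtain ⟨k, hk⟩ := Finset.card_pos.1 (by omega : 0 < (Finset.univ.filter (fun k => j k ≠ 0)).card)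
        have := Finset.le_sup (f := fun k => if j k ≠ 0 then 1 else 0) (Finset.mem_univ k)
        simpa [(Finset.mem_filter.1 hk).2] using this
    unfold idxBeta
    rw [hsup, Fintype.mem_piFinset]
    intro k
    have := hj k
    by_cases h : j k = 0
    · simp [h]
    · simp [h]; omega

lemma coef_sub (d : ℕ) (n : Fin d → ℕ) (θ θ' : (∀ k : Fin d, Fin (n k)) → ℝ) (j : Fin d → ℕ) :
    coef d n (latExtend d n (fun i => θ i - θ' i)) j =
      coef d n (latExtend d n θ) j - coef d n (latExtend d n θ') j := by
  have h : latExtend d n (fun i => θ i - θ' i) =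
      fun i => latExtend d n θ i - latExtend d n θ' i := by
    funext i; unfold latExtend; split_ifs <;> simp
  rw [h]
  unfold coef H2 mixedDiff
  simp_rw [mul_sub, Finset.sum_sub_distrib, sub_mul]
lemma card_level (d s l : ℕ) (hs : 1 ≤ s) (hsd : s ≤ d) (P : Fin d → ℕ) :
    ((Fintype.piFinset (fun k => Finset.range (P k + 1))).filter
      (fun p => (Finset.univ.filter (fun k => p k ≠ 0)).card ≤ s ∧ ∑ k, p k = l)).card
      ≤ 2 ^ d * (l + 1) ^ (s - 1) := by
  classical
  have h1 : (Fintype.piFinset (fun k => Finset.range (P k + 1))).filter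
      (fun p => (Finset.univ.filter (fun k => p k ≠ 0)).card ≤ s ∧ ∑ k, p k = l) ⊆
      (Finset.powersetCard s (Finset.univ : Finset (Fin d))).biUnion (fun A =>
        (Fintype.piFinset (fun k => Finset.range (P k + 1))).filter
          (fun p => (∀ k ∉ A, p k = 0) ∧ ∑ k, p k = l)) := by
    intro p hp
    simp only [Finset.mem_filter] at hp
    obtain ⟨hp1, hp2, hp3⟩ := hp
    obtain ⟨A, hA1, hA2, hA3⟩ := Finset.exists_subsuperset_card_eq
      (Finset.subset_univ (Finset.univ.filter (fun k => p k ≠ 0))) hp2 (by simpa using hsd)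
    simp only [Finset.mem_biUnion, Finset.mem_powersetCard, Finset.mem_filter]
    refine ⟨A, ⟨hA2, hA3⟩, hp1, ?_, hp3⟩
    intro k hk
    by_contra h
    exact hk (hA1 (by simpa using h))
  refine (Finset.card_le_card h1).trans (Finset.card_biUnion_le.trans ?_)
  have h2 : ∀ A ∈ Finset.powersetCard s (Finset.univ : Finset (Fin d)),
      ((Fintype.piFinset (fun k => Finset.range (P k + 1))).filter
          (fun p => (∀ k ∉ A, p k = 0) ∧ ∑ k, p k = l)).card ≤ (l + 1) ^ (s - 1) := by
    intro A hA
    have hA := (Finset.mem_powersetCard.1 hA).2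
    obtain ⟨k0, hk0⟩ := Finset.card_pos.1 (by omega : 0 < A.card)
    have hcard : (Fintype.piFinset (fun k => if k ∈ A.erase k0 then Finset.range (l + 1) else {0})).card
        = (l + 1) ^ (s - 1) := by
      rw [Fintype.card_piFinset]
      have : ∀ k, (if k ∈ A.erase k0 then Finset.range (l + 1) else {0}).card =
          if k ∈ A.erase k0 then l + 1 else 1 := by
        intro k; split_ifs <;> simp
      simp_rw [this]
      rw [Finset.prod_ite_mem]
      simp [Finset.card_erase_of_mem hk0, hA]
    rw [← hcard]
    apply Finset.card_le_card_of_injOn (fun p => Function.update p k0 0)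
    · intro p hp
      simp only [Finset.coe_filter, Set.mem_ofPred_eq] at hp
      obtain ⟨_, hp2, hp3⟩ := hp
      simp only [Finset.mem_coe, Fintype.mem_piFinset]
      intro k
      by_cases hk : k = k0
      · subst hk; simp
      · rw [Function.update_of_ne hk]
        split_ifs with h
        · have := Finset.single_le_sum (f := p) (fun _ _ => Nat.zero_le _) (Finset.mem_univ k)
          rw [Finset.mem_range]; omega
        · have : k ∉ A := fun h' => h (Finset.mem_erase.2 ⟨hk, h'⟩)
          simp [hp2 k this]
    · intro p hp q hq hpq
      simp only [Finset.coe_filter, Set.mem_ofPred_eq] at hp hq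
      have hne : ∀ k, k ≠ k0 → p k = q k := by
        intro k hk
        have := congrFun hpq k
        simpa [Function.update_of_ne hk] using this
      funext k
      by_cases hk : k = k0
      · subst hk
        have e1 := Finset.add_sum_erase Finset.univ p (Finset.mem_univ k)
        have e2 := Finset.add_sum_erase Finset.univ q (Finset.mem_univ k)
        have e3 : ∑ x ∈ Finset.univ.erase k, p x = ∑ x ∈ Finset.univ.erase k, q x :=
          Finset.sum_congr rfl fun x hx => hne x (Finset.mem_erase.1 hx).1
        omega
      · exact hne k hk
  refine (Finset.sum_le_sum h2).trans ?_
  rw [Finset.sum_const, smul_eq_mul, Finset.card_powersetCard]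
  gcongr
  simpa using Nat.choose_le_two_pow d s

lemma sum_level (d s : ℕ) (hs : 1 ≤ s) (hsd : s ≤ d) (P : Fin d → ℕ) (f : ℕ → ℝ)
    (hf : ∀ l, 0 ≤ f l) (T : Finset (Fin d → ℕ)) (U : Finset ℕ)
    (hT : ∀ p ∈ T, p ∈ Fintype.piFinset (fun k => Finset.range (P k + 1)) ∧
      (Finset.univ.filter (fun k => p k ≠ 0)).card ≤ s ∧ ∑ k, p k ∈ U) :
    ∑ p ∈ T, f (∑ k, p k) ≤ 2 ^ d * ∑ l ∈ U, ((l : ℝ) + 1) ^ (s - 1) * f l := by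
  classical
  rw [← Finset.sum_fiberwise_of_maps_to (g := fun p => ∑ k, p k) (t := U)
    (fun p hp => (hT p hp).2.2), Finset.mul_sum]
  apply Finset.sum_le_sum
  intro l _
  have h1 : ∑ p ∈ T with ∑ k, p k = l, f (∑ k, p k) = ∑ p ∈ T with ∑ k, p k = l, f l :=
    Finset.sum_congr rfl fun p hp => by rw [(Finset.mem_filter.1 hp).2]
  rw [h1, Finset.sum_const, nsmul_eq_mul, ← mul_assoc]
  apply mul_le_mul_of_nonneg_right _ (hf l)
  have h2 : (T.filter (fun p => ∑ k, p k = l)).card ≤ 2 ^ d * (l + 1) ^ (s - 1) := by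
    refine le_trans (Finset.card_le_card ?_) (card_level d s l hs hsd P)
    intro p hp
    rw [Finset.mem_filter] at hp ⊢
    exact ⟨(hT p hp.1).1, (hT p hp.1).2.1, hp.2⟩
  exact_mod_cast h2

/-- `2^{-3/2}` -/
noncomputable def rr : ℝ := (2 : ℝ) ^ (-(3 / 2) : ℝ)

lemma rr_pos : 0 < rr := by unfold rr; positivity

lemma rr_sq : rr ^ 2 = 1 / 8 := by
  unfold rr
  rw [← Real.rpow_natCast, ← Real.rpow_mul (by norm_num)]
  rw [show (-(3 / 2) : ℝ) * (2 : ℕ) = ((-3 : ℤ) : ℝ) by norm_num, Real.rpow_intCast]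
  norm_num

lemma rr_lt : rr < 1 := by
  have := rr_sq; have := rr_pos; nlinarith

lemma rr_pow (J : ℕ) : rr ^ J = ((2 : ℝ) ^ J) ^ (-(3 / 2) : ℝ) := by
  unfold rr
  rw [← Real.rpow_natCast, ← Real.rpow_natCast, ← Real.rpow_mul (by norm_num),
    ← Real.rpow_mul (by norm_num), mul_comm]

lemma tail_sum (d : ℕ) : ∃ G : ℝ, 0 < G ∧ ∀ s ≤ d, ∀ J N : ℕ,
    ∑ l ∈ Finset.Ico (J + 1) N, ((l : ℝ) + 1) ^ s * rr ^ l ≤ G * (((J : ℝ) + 1) ^ s * rr ^ J) := by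
  have hr := rr_pos
  have hsum : Summable (fun k : ℕ => ((k : ℝ) + 1) ^ d * rr ^ k) := by
    have h1 : Summable (fun k : ℕ => (k : ℝ) ^ d * rr ^ k) := by
      apply summable_pow_mul_geometric_of_norm_lt_one
      rw [Real.norm_eq_abs, abs_of_pos hr]; exact rr_lt
    have h2 := ((summable_nat_add_iff 1).2 h1).mul_left rr⁻¹
    refine h2.congr ?_
    intro k
    push_cast
    rw [pow_succ]
    field_simp
  refine ⟨∑' k : ℕ, ((k : ℝ) + 1) ^ d * rr ^ k, ?_, ?_⟩
  · exact hsum.tsum_pos (fun k => by positivity) 0 (by simp)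
  · intro s hs J N
    rcases le_total N J with h | h
    · rw [Finset.Ico_eq_empty (by omega)]
      simp only [Finset.sum_empty]
      have : 0 ≤ ∑' k : ℕ, ((k : ℝ) + 1) ^ d * rr ^ k := tsum_nonneg fun k => by positivity
      positivity
    · calc _ ≤ ∑ l ∈ Finset.Ico J N, ((l : ℝ) + 1) ^ s * rr ^ l := by
            apply Finset.sum_le_sum_of_subset_of_nonneg
            · exact Finset.Ico_subset_Ico_left (by omega)
            · intro l _ _; positivity
        _ = ∑ k ∈ Finset.range (N - J), (((J + k : ℕ) : ℝ) + 1) ^ s * rr ^ (J + k) :=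
            Finset.sum_Ico_eq_sum_range _ _ _
        _ ≤ ∑ k ∈ Finset.range (N - J), (((k : ℝ) + 1) ^ d * rr ^ k) * (((J : ℝ) + 1) ^ s * rr ^ J) := by
            apply Finset.sum_le_sum
            intro k _
            have e1 : (((J + k : ℕ) : ℝ) + 1) ≤ ((k : ℝ) + 1) * ((J : ℝ) + 1) := by
              push_cast
              have : (0:ℝ) ≤ k * J := by positivity
              linarith
            have e2 : (((J + k : ℕ) : ℝ) + 1) ^ s ≤ ((k : ℝ) + 1) ^ s * ((J : ℝ) + 1) ^ s := by
              rw [← mul_pow]; gcongr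
            have e3 : ((k : ℝ) + 1) ^ s ≤ ((k : ℝ) + 1) ^ d := by
              apply pow_le_pow_right₀ _ hs
              have : (0:ℝ) ≤ k := by positivity
              linarith
            calc _ ≤ (((k : ℝ) + 1) ^ s * ((J : ℝ) + 1) ^ s) * rr ^ (J + k) := by gcongr
              _ ≤ (((k : ℝ) + 1) ^ d * ((J : ℝ) + 1) ^ s) * rr ^ (J + k) := by gcongr
              _ = _ := by rw [pow_add]; ring
        _ ≤ _ := by
            rw [← Finset.sum_mul]
            gcongr
            exact hsum.sum_le_tsum _ (fun k _ => by positivity)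

lemma opt (d s : ℕ) (hs : 1 ≤ s) (hsd : s ≤ d) (x : ℝ) (hx : 0 < x) : ∃ J : ℕ,
    (2:ℝ) ^ J * ((J:ℝ) + 1) ^ (s - 1) + x * (((J:ℝ) + 1) ^ s * rr ^ J) ≤
      4 * 3 ^ d * (x ^ ((2:ℝ) / 5) * Real.log (2 + x) ^ (3 * (2 * (s:ℝ) - 1) / 5) + 1) := by
  have h3d : (1:ℝ) ≤ 3 ^ d := one_le_pow₀ (by norm_num)
  set L := Real.log (2 + x) with hL
  have hL0 : 0 < L := Real.log_pos (by linarith)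
  rcases le_total x 1 with hx1 | hx1
  · refine ⟨0, ?_⟩
    have : 0 ≤ x ^ ((2:ℝ) / 5) * L ^ (3 * (2 * (s:ℝ) - 1) / 5) := by positivity
    simp
    nlinarith
  · have hL1 : 1 ≤ L := by
      rw [hL, Real.le_log_iff_exp_le (by linarith)]
      have := Real.exp_one_lt_d9; linarith
    have hxL : 1 ≤ x * L := by nlinarith
    set z := (x * L) ^ ((2:ℝ) / 5) with hz
    have hz1 : 1 ≤ z := Real.one_le_rpow hxL (by norm_num)
    obtain ⟨J, hJ1, hJ2⟩ := exists_nat_pow_near hz1 (by norm_num : (1:ℝ) < 2)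
    refine ⟨J, ?_⟩
    have hJL : (J : ℝ) + 1 ≤ 3 * L := by
      have h1 : (J:ℝ) * Real.log 2 ≤ (2 / 5) * (Real.log x + Real.log L) := by
        have := Real.log_le_log (by positivity) hJ1
        rw [Real.log_pow, hz, Real.log_rpow (by positivity), Real.log_mul (by positivity) (by positivity)] at this
        exact this
      have h2 : Real.log x ≤ L := Real.log_le_log hx (by linarith)
      have h3 : Real.log L ≤ L := Real.log_le_self hL0.le
      have h4 := Real.log_two_gt_d9
      have h5 : (0:ℝ) ≤ J := by positivity
      nlinarith
    have hrJ : rr ^ J ≤ 3 * (x * L) ^ (-(3 / 5) : ℝ) := by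
      rw [rr_pow]
      have h1 : z / 2 ≤ 2 ^ J := by rw [pow_succ] at hJ2; linarith
      have h2 : ((2:ℝ) ^ J) ^ (-(3 / 2) : ℝ) ≤ (z / 2) ^ (-(3 / 2) : ℝ) :=
        Real.rpow_le_rpow_of_nonpos (by positivity) h1 (by norm_num)
      refine h2.trans ?_
      rw [Real.div_rpow (by positivity) (by norm_num), hz, ← Real.rpow_mul (by positivity)]
      rw [show (2:ℝ) / 5 * -(3 / 2) = -(3 / 5) by norm_num]
      have h3 : (2:ℝ) ^ (-(3 / 2) : ℝ) = rr := rfl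
      rw [h3, div_eq_mul_inv, mul_comm]
      apply mul_le_mul_of_nonneg_right _ (by positivity)
      have := rr_sq; have := rr_pos
      rw [inv_le_comm₀ rr_pos (by norm_num)]
      by_contra hcon
      push Not at hcon
      nlinarith
    have key : ∀ e : ℝ, e = (s:ℝ) - 3 / 5 → L ^ e ≤ L ^ (3 * (2 * (s:ℝ) - 1) / 5) := by
      intro e he
      apply Real.rpow_le_rpow_of_exponent_le hL1
      have : (1:ℝ) ≤ s := by exact_mod_cast hs
      linarith
    have k1 := key _ rfl
    have hJ0 : (0:ℝ) ≤ (J:ℝ) + 1 := by positivity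
    have t1 : (2:ℝ) ^ J * ((J:ℝ) + 1) ^ (s - 1) ≤ 3 ^ d * (x ^ ((2:ℝ)/5) * L ^ ((s:ℝ) - 3/5)) := by
      calc _ ≤ z * (3 * L) ^ (s - 1) := by gcongr
        _ = 3 ^ (s - 1) * (x ^ ((2:ℝ)/5) * (L ^ ((2:ℝ)/5) * L ^ (s - 1))) := by
            rw [hz, Real.mul_rpow hx.le hL0.le, mul_pow]; ring
        _ = 3 ^ (s - 1) * (x ^ ((2:ℝ)/5) * L ^ ((s:ℝ) - 3/5)) := by
            rw [← Real.rpow_natCast L, ← Real.rpow_add hL0, Nat.cast_sub hs]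
            congr 3; push_cast; ring
        _ ≤ _ := by
            gcongr
            · norm_num
            · omega
    have t2 : x * (((J:ℝ) + 1) ^ s * rr ^ J) ≤ 3 * (3 ^ d * (x ^ ((2:ℝ)/5) * L ^ ((s:ℝ) - 3/5))) := by
      have := rr_pos
      calc _ ≤ x * ((3 * L) ^ s * (3 * (x * L) ^ (-(3 / 5) : ℝ))) := by gcongr
        _ = 3 * (3 ^ s * ((x * x ^ (-(3/5) : ℝ)) * (L ^ s * L ^ (-(3/5):ℝ)))) := by
            rw [Real.mul_rpow hx.le hL0.le, mul_pow]; ring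
        _ = 3 * (3 ^ s * (x ^ ((2:ℝ)/5) * L ^ ((s:ℝ) - 3/5))) := by
            have e1 : x * x ^ (-(3/5) : ℝ) = x ^ ((2:ℝ)/5) := by
              nth_rewrite 1 [← Real.rpow_one x]
              rw [← Real.rpow_add hx]; norm_num
            have e2 : L ^ s * L ^ (-(3/5):ℝ) = L ^ ((s:ℝ) - 3/5) := by
              rw [← Real.rpow_natCast L, ← Real.rpow_add hL0]; rfl
            rw [e1, e2]
        _ ≤ _ := by
            gcongr
            norm_num
    have t3 : 3 ^ d * (x ^ ((2:ℝ)/5) * L ^ ((s:ℝ) - 3/5)) ≤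
        3 ^ d * (x ^ ((2:ℝ)/5) * L ^ (3 * (2 * (s:ℝ) - 1) / 5)) := by gcongr
    linarith
lemma scale_eq (σ V N : ℝ) (hσ : 0 < σ) (hV : 0 < V) (hN : 0 < N) :
    (σ ^ 2 * V ^ ((1:ℝ) / 2) / N) ^ ((4:ℝ) / 5) =
      σ ^ 2 / N * (V * N ^ ((1:ℝ) / 2) / σ) ^ ((2:ℝ) / 5) := by
  apply Real.log_injOn_pos (Set.mem_Ioi.2 (by positivity)) (Set.mem_Ioi.2 (by positivity))
  rw [Real.log_rpow (by positivity), Real.log_mul (by positivity) (by positivity),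
    Real.log_rpow (by positivity), Real.log_div (by positivity) (by positivity),
    Real.log_div (by positivity) (by positivity), Real.log_div (by positivity) (by positivity),
    Real.log_mul (by positivity) (by positivity), Real.log_mul (by positivity) (by positivity),
    Real.log_rpow (by positivity), Real.log_rpow (by positivity), Real.log_pow]
  push_cast
  ring

/-- deterministic tensor expansion -/
lemma tensor_expand (d : ℕ) (n : Fin d → ℕ) (P : Fin d → ℕ) (ψ : Fin d → ℕ → ℕ → ℕ → ℝ)
    (lam : Fin d → ℕ → ℕ → ℝ) (m : Fin d → ℕ → ℕ → ℕ)
    (h : ∀ k, ∀ j < n k, ∀ i < n k, gfun (n k) j i =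
      ∑ p ∈ Finset.range (P k + 1), lam k p j * ψ k p (m k p j) i)
    (j : Fin d → ℕ) (hj : ∀ k, j k < n k) (i : Fin d → ℕ) (hi : ∀ k, i k < n k) :
    ∏ k, gfun (n k) (j k) (i k) = ∑ p ∈ Fintype.piFinset (fun k => Finset.range (P k + 1)),
      (∏ k, lam k (p k) (j k)) * ∏ k, ψ k (p k) (m k (p k) (j k)) (i k) := by
  classical
  rw [Finset.prod_congr rfl fun k _ => h k (j k) (hj k) (i k) (hi k), Finset.prod_univ_sum]
  simp_rw [Finset.prod_mul_distrib]

lemma tensor_norm (d : ℕ) (n : Fin d → ℕ) (f : Fin d → ℕ → ℝ) (p : Fin d → ℕ)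
    (h : ∀ k, ∑ i ∈ Finset.range (n k), f k i ^ 2 ≤ 64 * n k * (1 / 8) ^ (p k)) :
    ∑ i : (∀ k : Fin d, Fin (n k)), (∏ k, f k (i k)) ^ 2 ≤
      (8 ^ d * (∏ k, (n k : ℝ)) ^ ((1:ℝ)/2) * rr ^ (∑ k, p k)) ^ 2 := by
  classical
  have h0 : ∑ i : (∀ k : Fin d, Fin (n k)), (∏ k, f k (i k)) ^ 2 =
      ∏ k, ∑ i ∈ Finset.range (n k), f k i ^ 2 := by
    simp_rw [← Finset.prod_pow, Finset.sum_range]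
    rw [Finset.prod_univ_sum, Fintype.piFinset_univ]
  have hN : (0:ℝ) ≤ ∏ k, (n k : ℝ) := by positivity
  have h1 : ((∏ k, (n k : ℝ)) ^ ((1:ℝ)/2)) ^ 2 = ∏ k, (n k : ℝ) := by
    rw [← Real.rpow_natCast, ← Real.rpow_mul hN]; norm_num
  rw [h0, mul_pow, mul_pow, h1, ← pow_mul rr, mul_comm _ 2, pow_mul rr, rr_sq, ← pow_mul, mul_comm d 2, pow_mul]
  calc _ ≤ ∏ k, (64 * (n k : ℝ) * (1 / 8) ^ (p k)) :=
        Finset.prod_le_prod (fun k _ => Finset.sum_nonneg fun i _ => sq_nonneg _) fun k _ => h k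
    _ = _ := by
        rw [Finset.prod_mul_distrib, Finset.prod_mul_distrib, Finset.prod_pow_eq_pow_sum]
        simp; norm_num

theorem main_bound (d : ℕ) : ∃ C1 : ℝ, 0 < C1 ∧
      ∀ s : ℕ, 1 ≤ s → s ≤ d →
      ∀ n : Fin d → ℕ, (∀ k, 2 ≤ n k) →
      ∀ σ V : ℝ, 0 < σ → 0 < V → ∀ v : NNReal, (v : ℝ) = σ ^ 2 → ∀ J : ℕ,
      ∃ F : ((∀ k : Fin d, Fin (n k)) → ℝ) → ℝ,
        Integrable F (Measure.pi fun _ => ProbabilityTheory.gaussianReal 0 v) ∧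
        ∫ ξ, F ξ ∂(Measure.pi fun _ => ProbabilityTheory.gaussianReal 0 v) ≤
          C1 * (σ ^ 2 * ((2:ℝ) ^ J * ((J:ℝ) + 1) ^ (s - 1)) +
            V * (∏ k, (n k : ℝ)) ^ ((1:ℝ)/2) * σ * (((J:ℝ) + 1) ^ s * rr ^ J)) ∧
        ∀ ξ, ∀ θ ∈ CsSet d n s V, ∀ θ' ∈ CsSet d n s V,
          ∑ i, (θ i - θ' i) ^ 2 ≤ 2 * ∑ i, (θ i - θ' i) * ξ i →
          ∑ i, (θ i - θ' i) ^ 2 ≤ F ξ := by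
  classical
  obtain ⟨G, hG, hGsum⟩ := tail_sum d
  refine ⟨64 * 4 ^ d + 8 * 16 ^ d * (d + 4) * G, by positivity, ?_⟩
  intro s hs hsd n hn σ V hσ hV v hv J
  choose P ψ lam m o1 o2 o3 o4 o5 using fun k => oneD (n k) (hn k)
  have hN : (0:ℝ) < ∏ k, (n k : ℝ) :=
    Finset.prod_pos fun k _ => by have := hn k; positivity
  have hr := rr_pos
  set Box := Fintype.piFinset (fun k => Finset.range (P k + 1)) with hBox
  set Low := Box.filter (fun p => (Finset.univ.filter (fun k => p k ≠ 0)).card ≤ s ∧ ∑ k, p k ≤ J) with hLow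
  set T := Box.filter (fun p => (Finset.univ.filter (fun k => p k ≠ 0)).card ≤ s ∧ J < ∑ k, p k) with hT
  let Mm : (Fin d → ℕ) → Finset (Fin d → ℕ) := fun p =>
    Fintype.piFinset (fun k => Finset.range (2 ^ (p k + 1)))
  have hMm : ∀ p, (Mm p).card = 2 ^ (∑ k, p k + d) := by
    intro p
    simp [Mm, Finset.prod_pow_eq_pow_sum, Finset.sum_add_distrib]
  let Ψ : (Fin d → ℕ) → (Fin d → ℕ) → EuclideanSpace ℝ (∀ k : Fin d, Fin (n k)) := fun p q =>
    WithLp.toLp 2 (fun i => ∏ k, ψ k (p k) (q k) (i k))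
  let A : Finset (Σ _ : (Fin d → ℕ), (Fin d → ℕ)) := Low.sigma Mm
  let c8 : ℝ := 8 ^ d * (∏ k, (n k : ℝ)) ^ ((1:ℝ)/2)
  have hc8 : 0 < c8 := by positivity
  obtain ⟨F, hF1, hF2, hF3⟩ := stat_core (β := Fin d → ℕ) σ hσ v hv (2 * V) (by positivity) A
    (fun a => Ψ a.1 a.2) T Mm Ψ (fun p => σ * (c8 * rr ^ (∑ k, p k)))
    (fun p => ((∑ k, p k : ℕ) : ℝ) + d) (fun p _ => by positivity) (fun p _ => by positivity)
    (by
      intro p _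
      rw [hMm]
      push_cast
      have h2 : (2:ℝ) ≤ Real.exp 1 := by have := Real.exp_one_gt_d9; linarith
      calc (2:ℝ) ^ (∑ k, p k + d) ≤ (Real.exp 1) ^ (∑ k, p k + d) := by gcongr
        _ = _ := by rw [← Real.exp_nat_mul]; push_cast; simp)
    (by
      intro p hp q _
      have hp := (Finset.mem_filter.1 hp).1
      rw [hBox, Fintype.mem_piFinset] at hp
      apply mul_le_mul_of_nonneg_left _ hσ.le
      refine (sq_le_sq₀ (norm_nonneg _) (by positivity)).1 ?_
      rw [EuclideanSpace.real_norm_sq_eq]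
      exact tensor_norm d n (fun k i => ψ k (p k) (q k) i) p (fun k => o4 k (p k) (hp k) (q k)))
  refine ⟨F, hF1, hF2.trans ?_, ?_⟩
  · have a1 : (A.card : ℝ) ≤ 2 * 4 ^ d * ((2:ℝ) ^ J * ((J:ℝ) + 1) ^ (s - 1)) := by
      have e1 : (A.card : ℝ) = ∑ p ∈ Low, (2:ℝ) ^ (∑ k, p k + d) := by
        simp only [A, Finset.card_sigma, hMm]; push_cast; rfl
      rw [e1]
      refine (sum_level d s hs hsd P (fun l => (2:ℝ) ^ (l + d)) (fun l => by positivity) Low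
        (Finset.range (J + 1)) ?_).trans ?_
      · intro p hp
        have hp := Finset.mem_filter.1 hp
        exact ⟨hp.1, hp.2.1, Finset.mem_range.2 (by omega)⟩
      · have e2 : ∑ l ∈ Finset.range (J + 1), ((l:ℝ) + 1) ^ (s - 1) * (2:ℝ) ^ (l + d) ≤
            ∑ l ∈ Finset.range (J + 1), ((J:ℝ) + 1) ^ (s - 1) * 2 ^ d * (2:ℝ) ^ l := by
          apply Finset.sum_le_sum
          intro l hl
          have hl : (l:ℝ) ≤ J := by
            have := Finset.mem_range.1 hl
            exact_mod_cast (by omega : l ≤ J)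
          rw [pow_add, mul_assoc, mul_comm ((2:ℝ) ^ l)]
          gcongr
        rw [← Finset.mul_sum] at e2
        have e3 : ∑ l ∈ Finset.range (J + 1), (2:ℝ) ^ l ≤ 2 * 2 ^ J := by
          rw [geom_sum_eq (by norm_num)]; rw [pow_succ]; norm_num; linarith
        calc _ ≤ 2 ^ d * (((J:ℝ) + 1) ^ (s - 1) * 2 ^ d * (2 * 2 ^ J)) := by
              refine mul_le_mul_of_nonneg_left (e2.trans ?_) (by positivity)
              gcongr
          _ = _ := by
              rw [show (4:ℝ) ^ d = 2 ^ d * 2 ^ d by rw [← mul_pow]; norm_num]; ring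
    have a2 : ∑ p ∈ T, σ * (c8 * rr ^ (∑ k, p k)) * (((∑ k, p k : ℕ) : ℝ) + d + 4) ≤
        2 ^ d * (σ * c8 * (d + 4) * (G * (((J:ℝ) + 1) ^ s * rr ^ J))) := by
      refine (sum_level d s hs hsd P (fun l => σ * (c8 * rr ^ l) * ((l:ℝ) + d + 4))
        (fun l => by positivity) T (Finset.Ico (J + 1) (∑ k, P k + 1)) ?_).trans ?_
      · intro p hp
        have hp := Finset.mem_filter.1 hp
        refine ⟨hp.1, hp.2.1, ?_⟩
        have h1 := hp.1
        rw [hBox, Fintype.mem_piFinset] at h1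
        have : ∑ k, p k ≤ ∑ k, P k := Finset.sum_le_sum fun k _ => by
          have := Finset.mem_range.1 (h1 k); omega
        rw [Finset.mem_Ico]; omega
      · apply mul_le_mul_of_nonneg_left _ (by positivity)
        calc _ ≤ ∑ l ∈ Finset.Ico (J + 1) (∑ k, P k + 1), σ * c8 * (d + 4) * (((l:ℝ) + 1) ^ s * rr ^ l) := by
              apply Finset.sum_le_sum
              intro l _
              have h1 : ((l:ℝ) + 1) ^ s = ((l:ℝ) + 1) ^ (s - 1) * (l + 1) := by
                rw [← pow_succ]; congr 1; omega
              have h2 : (l:ℝ) + d + 4 ≤ (d + 4) * (l + 1) := by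
                have : (0:ℝ) ≤ (d:ℝ) * l := by positivity
                have : (0:ℝ) ≤ (l:ℝ) := by positivity
                linarith
              rw [h1]
              calc _ ≤ ((l:ℝ) + 1) ^ (s - 1) * (σ * (c8 * rr ^ l) * ((d + 4) * (l + 1))) := by gcongr
                _ = _ := by ring
          _ ≤ _ := by
              rw [← Finset.mul_sum]
              apply mul_le_mul_of_nonneg_left (hGsum s hsd J _) (by positivity)
    have b1 : 0 ≤ σ ^ 2 * ((2:ℝ) ^ J * ((J:ℝ) + 1) ^ (s - 1)) := by positivity
    have b2 : 0 ≤ V * (∏ k, (n k : ℝ)) ^ ((1:ℝ)/2) * σ * (((J:ℝ) + 1) ^ s * rr ^ J) := by positivity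
    calc _ ≤ 32 * σ ^ 2 * (2 * 4 ^ d * ((2:ℝ) ^ J * ((J:ℝ) + 1) ^ (s - 1))) +
          4 * (2 * V) * (2 ^ d * (σ * c8 * (d + 4) * (G * (((J:ℝ) + 1) ^ s * rr ^ J)))) := by
          gcongr
      _ = 64 * 4 ^ d * (σ ^ 2 * ((2:ℝ) ^ J * ((J:ℝ) + 1) ^ (s - 1))) +
          8 * 16 ^ d * (d + 4) * G * (V * (∏ k, (n k : ℝ)) ^ ((1:ℝ)/2) * σ * (((J:ℝ) + 1) ^ s * rr ^ J)) := by
          rw [show (16:ℝ) ^ d = 2 ^ d * 8 ^ d by rw [← mul_pow]; norm_num]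
          simp only [c8]; ring
      _ ≤ _ := by
          have c1 : 0 ≤ 64 * 4 ^ d * (V * (∏ k, (n k : ℝ)) ^ ((1:ℝ)/2) * σ * (((J:ℝ) + 1) ^ s * rr ^ J)) := by positivity
          have c2 : 0 ≤ 8 * 16 ^ d * (d + 4) * G * (σ ^ 2 * ((2:ℝ) ^ J * ((J:ℝ) + 1) ^ (s - 1))) := by positivity
          rw [mul_add, add_mul, add_mul]
          linarith
  · intro ξ θ hθ θ' hθ' hbasic
    set I0 := Fintype.piFinset (fun k => Finset.range (n k)) with hI0
    let c : (Fin d → ℕ) → ℝ := coef d n (latExtend d n (fun i => θ i - θ' i))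
    let Λ : (Fin d → ℕ) → (Fin d → ℕ) → ℝ := fun p j => ∏ k, lam k (p k) (j k)
    let mm : (Fin d → ℕ) → (Fin d → ℕ) → (Fin d → ℕ) := fun p j k => m k (p k) (j k)
    let η : EuclideanSpace ℝ (∀ k : Fin d, Fin (n k)) := WithLp.toLp 2 (fun i => θ i - θ' i)
    let B := I0.filter (fun j => ∃ k, 2 ≤ j k)
    have hI0m : ∀ j ∈ I0, ∀ k, j k < n k := by
      intro j hj; simpa [hI0, Fintype.mem_piFinset] using hj
    have hnorm : ‖η‖ ^ 2 = ∑ i, (θ i - θ' i) ^ 2 := by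
      rw [EuclideanSpace.real_norm_sq_eq]
    rw [← hnorm]
    have hcz : ∀ j ∈ I0, s < (Finset.univ.filter (fun k => j k ≠ 0)).card → c j = 0 := by
      intro j hj hsj
      simp only [c]
      rw [coef_sub, coef_zero d s n hs V θ hθ j hj hsj, coef_zero d s n hs V θ' hθ' j hj hsj, sub_zero]
    have hsplit : ∀ j ∈ I0, c j • ∑ p ∈ Box, Λ p j • Ψ p (mm p j) =
        c j • ∑ p ∈ Low, Λ p j • Ψ p (mm p j) + c j • ∑ p ∈ T, Λ p j • Ψ p (mm p j) := by
      intro j hj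
      by_cases hsj : s < (Finset.univ.filter (fun k => j k ≠ 0)).card
      · simp [hcz j hj hsj]
      · rw [← smul_add]
        congr 1
        rw [hLow, hT, Finset.sum_filter, Finset.sum_filter, ← Finset.sum_add_distrib]
        apply Finset.sum_congr rfl
        intro p hp
        by_cases hg : (Finset.univ.filter (fun k => p k ≠ 0)).card ≤ s
        · by_cases hJ : ∑ k, p k ≤ J
          · rw [if_pos ⟨hg, hJ⟩, if_neg (by omega), add_zero]
          · rw [if_neg (by omega), if_pos ⟨hg, by omega⟩, zero_add]
        · rw [if_neg (by omega), if_neg (by omega), add_zero]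
          have : Λ p j = 0 := by
            have hex : ∃ k, p k ≠ 0 ∧ j k = 0 := by
              by_contra hcon
              push Not at hcon
              apply hg
              refine le_trans (Finset.card_le_card ?_) (not_lt.1 hsj)
              intro k hk
              rw [Finset.mem_filter] at hk ⊢
              exact ⟨Finset.mem_univ _, hcon k hk.2⟩
            obtain ⟨k, hk1, hk2⟩ := hex
            apply Finset.prod_eq_zero (Finset.mem_univ k)
            exact o3 k (p k) (by omega) (j k) (by omega)
          rw [this, zero_smul]
    have hηsum : η = ∑ j ∈ I0, c j • ∑ p ∈ Box, Λ p j • Ψ p (mm p j) := by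
      ext i
      have h1 : θ i - θ' i = latExtend d n (fun i => θ i - θ' i) (fun k => (i k : ℕ)) := by
        simp [latExtend]
      have h2 := rep' d n hn (latExtend d n (fun i => θ i - θ' i)) (fun k => (i k : ℕ))
        (fun k => (i k).2)
      have h3 : η i = θ i - θ' i := rfl
      rw [h3, h1, h2]
      simp only [WithLp.ofLp_sum, WithLp.ofLp_smul, Finset.sum_apply, Pi.smul_apply, smul_eq_mul]
      apply Finset.sum_congr rfl
      intro j hj
      rw [tensor_expand d n P ψ lam m o5 j (hI0m j hj) (fun k => (i k : ℕ)) (fun k => (i k).2)]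
    refine hF3 ξ η (∑ j ∈ I0, c j • ∑ p ∈ Low, Λ p j • Ψ p (mm p j)) B c Λ mm ?_ ?_ ?_ ?_ ?_ ?_
    · rw [hnorm]
      refine hbasic.trans (le_of_eq ?_)
      congr 1
      simp [η, PiLp.inner_apply, mul_comm]
    · apply Submodule.sum_mem
      intro j hj
      apply Submodule.smul_mem
      apply Submodule.sum_mem
      intro p hp
      apply Submodule.smul_mem
      apply Submodule.subset_span
      rw [Finset.mem_coe, Finset.mem_image]
      refine ⟨⟨p, mm p j⟩, ?_, rfl⟩
      simp only [A, Finset.mem_sigma]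
      refine ⟨hp, ?_⟩
      have hp := (Finset.mem_filter.1 hp).1
      rw [hBox, Fintype.mem_piFinset] at hp
      simp only [Mm, Fintype.mem_piFinset]
      intro k
      exact Finset.mem_range.2 (o2 k (p k) (hp k) (j k) (hI0m j hj k))
    · rw [hηsum, Finset.sum_congr rfl hsplit, Finset.sum_add_distrib]
      congr 1
      symm
      apply Finset.sum_subset (Finset.filter_subset _ _)
      intro j hj hjB
      have hj2 : ∀ k, j k < 2 := by
        intro k
        by_contra hcon
        exact hjB (Finset.mem_filter.2 ⟨hj, k, by omega⟩)
      rw [Finset.sum_eq_zero, smul_zero]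
      intro p hp
      have hp := (Finset.mem_filter.1 hp).2.2
      have hex : ∃ k, p k ≠ 0 := by
        by_contra hcon
        push Not at hcon
        simp [hcon] at hp
      obtain ⟨k, hk⟩ := hex
      have : Λ p j = 0 := Finset.prod_eq_zero (Finset.mem_univ k) (o3 k (p k) (by omega) (j k) (hj2 k))
      rw [this, zero_smul]
    · calc ∑ j ∈ B, |c j| ≤ ∑ j ∈ B, (|coef d n (latExtend d n θ) j| + |coef d n (latExtend d n θ') j|) := by
            apply Finset.sum_le_sum
            intro j _
            simp only [c]
            rw [coef_sub]
            exact abs_sub _ _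
        _ ≤ V + V := by
            rw [Finset.sum_add_distrib]
            exact add_le_add ((coef_sum d n _).trans hθ.1) ((coef_sum d n _).trans hθ'.1)
        _ = 2 * V := by ring
    · intro p hp j hj
      have hp := (Finset.mem_filter.1 hp).1
      have hj := (Finset.mem_filter.1 hj).1
      rw [hBox, Fintype.mem_piFinset] at hp
      simp only [Λ]
      rw [Finset.abs_prod]
      exact Finset.prod_le_one (fun k _ => abs_nonneg _) fun k _ => o1 k (p k) (hp k) (j k) (hI0m j hj k)
    · intro p hp j hj
      have hp := (Finset.mem_filter.1 hp).1
      have hj := (Finset.mem_filter.1 hj).1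
      rw [hBox, Fintype.mem_piFinset] at hp
      simp only [Mm, Fintype.mem_piFinset]
      intro k
      exact Finset.mem_range.2 (o2 k (p k) (hp k) (j k) (hI0m j hj k))

/-- Risk bound for the projection estimator onto `C^s(V)` on the
equally spaced lattice design, for `θ* ∈ C^s(V)`. -/
theorem statement3 (d : ℕ) (hd : 1 ≤ d) :
    ∃ C : ℝ, 0 < C ∧
      ∀ s : ℕ, 1 ≤ s → s ≤ d →
      ∀ n : Fin d → ℕ, (∀ k, 2 ≤ n k) →
      ∀ σ V : ℝ, 0 < σ → 0 < V →
      ∀ θstar : (∀ k : Fin d, Fin (n k)) → ℝ, θstar ∈ CsSet d n s V →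
      ∀ θhat : ((∀ k : Fin d, Fin (n k)) → ℝ) → (∀ k : Fin d, Fin (n k)) → ℝ,
        (∀ y, θhat y ∈ CsSet d n s V ∧
          ∀ θ ∈ CsSet d n s V,
            Real.sqrt (∑ i, (y i - θhat y i) ^ 2) ≤
              Real.sqrt (∑ i, (y i - θ i) ^ 2)) →
      (∫⁻ ξ, ENNReal.ofReal ((∏ k, (n k : ℝ))⁻¹ *
            ∑ i, (θhat (θstar + ξ) i - θstar i) ^ 2) ∂(gaussPi d n σ)) ≤
        ENNReal.ofReal
          (C * (σ ^ 2 * V ^ ((1 : ℝ) / 2) / ∏ k, (n k : ℝ)) ^ ((4 : ℝ) / 5) *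
              Real.log (2 + V * (∏ k, (n k : ℝ)) ^ ((1 : ℝ) / 2) / σ) ^
                (3 * (2 * (s : ℝ) - 1) / 5) +
            C * (σ ^ 2 / ∏ k, (n k : ℝ)) *
              Real.log (2 + V * (∏ k, (n k : ℝ)) ^ ((1 : ℝ) / 2) / σ) ^
                (3 * (2 * (s : ℝ) - 1) / 4) +
            C * (σ ^ 2 / ∏ k, (n k : ℝ)) * Real.log (∏ k, (n k : ℝ)) ^ 2) := by
  obtain ⟨C1, hC1, hmain⟩ := main_bound d
  refine ⟨C1 * (4 * 3 ^ d) * 4, by positivity, ?_⟩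
  intro s hs hsd n hn σ V hσ hV θstar hstar θhat hhat
  have hN : (0:ℝ) < ∏ k, (n k : ℝ) :=
    Finset.prod_pos fun k _ => by have := hn k; positivity
  have hN2 : (2:ℝ) ≤ ∏ k, (n k : ℝ) := by
    have h1 : ∀ k ∈ (Finset.univ : Finset (Fin d)), 1 ≤ n k := fun k _ => by have := hn k; omega
    have h2 := Finset.single_le_prod' h1 (Finset.mem_univ (⟨0, hd⟩ : Fin d))
    have h3 := (hn ⟨0, hd⟩).trans h2
    exact_mod_cast h3
  rw [scale_eq σ V _ hσ hV hN]
  set N := ∏ k, (n k : ℝ) with hNdef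
  set x := V * N ^ ((1:ℝ) / 2) / σ with hx
  have hx0 : 0 < x := by positivity
  obtain ⟨J, hJ⟩ := opt d s hs hsd x hx0
  obtain ⟨F, hF1, hF2, hF3⟩ := hmain s hs hsd n hn σ V hσ hV ⟨σ ^ 2, sq_nonneg σ⟩ rfl J
  have hpt : ∀ ξ, ∑ i, (θhat (θstar + ξ) i - θstar i) ^ 2 ≤ F ξ := by
    intro ξ
    obtain ⟨h1, h2⟩ := hhat (θstar + ξ)
    apply hF3 ξ _ h1 _ hstar
    have h3 := h2 θstar hstar
    rw [Real.sqrt_le_sqrt_iff (Finset.sum_nonneg fun i _ => sq_nonneg _)] at h3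
    have h4 : ∀ i, ((θstar + ξ) i - θhat (θstar + ξ) i) ^ 2 = ((θstar + ξ) i - θstar i) ^ 2
        - 2 * ((θhat (θstar + ξ) i - θstar i) * ξ i) + (θhat (θstar + ξ) i - θstar i) ^ 2 := by
      intro i; simp only [Pi.add_apply]; ring
    simp_rw [h4, Finset.sum_add_distrib, Finset.sum_sub_distrib, ← Finset.mul_sum] at h3
    linarith
  have hF0 : ∀ ξ, 0 ≤ F ξ := fun ξ =>
    (Finset.sum_nonneg fun i _ => sq_nonneg _).trans (hpt ξ)
  have hgauss : gaussPi d n σ = Measure.pi fun _ => ProbabilityTheory.gaussianReal 0 ⟨σ ^ 2, sq_nonneg σ⟩ := rfl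
  calc _ ≤ ∫⁻ ξ, ENNReal.ofReal (N⁻¹ * F ξ) ∂(gaussPi d n σ) := by
        apply lintegral_mono
        intro ξ
        apply ENNReal.ofReal_le_ofReal
        exact mul_le_mul_of_nonneg_left (hpt ξ) (by positivity)
    _ = ENNReal.ofReal (∫ ξ, N⁻¹ * F ξ ∂(gaussPi d n σ)) := by
        rw [ofReal_integral_eq_lintegral_ofReal]
        · exact hF1.const_mul _
        · exact Filter.Eventually.of_forall fun ξ => mul_nonneg (by positivity) (hF0 ξ)
    _ ≤ _ := by
        apply ENNReal.ofReal_le_ofReal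
        rw [integral_const_mul]
        have e1 : V * N ^ ((1:ℝ)/2) * σ = σ ^ 2 * x := by rw [hx]; field_simp
        rw [e1] at hF2
        set L := Real.log (2 + x) with hL
        have hL0 : 0 < L := Real.log_pos (by linarith)
        set E1 := x ^ ((2:ℝ) / 5) * L ^ (3 * (2 * (s:ℝ) - 1) / 5) with hE1
        have hE10 : 0 ≤ E1 := by positivity
        have e2 : ∫ ξ, F ξ ∂(gaussPi d n σ) ≤ C1 * (σ ^ 2 * (4 * 3 ^ d * (E1 + 1))) := by
          refine hF2.trans ?_
          rw [mul_assoc (σ ^ 2), ← mul_add]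
          gcongr
        have hlog : 1 ≤ 4 * Real.log N ^ 2 := by
          have h1 : Real.log 2 ≤ Real.log N := Real.log_le_log (by norm_num) hN2
          have h2 := Real.log_two_gt_d9
          nlinarith
        have e3 : 0 ≤ C1 * (4 * 3 ^ d) * 4 * (σ ^ 2 / N) * L ^ (3 * (2 * (s:ℝ) - 1) / 4) := by positivity
        have e4 : 0 ≤ C1 * (4 * 3 ^ d) * (σ ^ 2 / N) := by positivity
        calc _ ≤ N⁻¹ * (C1 * (σ ^ 2 * (4 * 3 ^ d * (E1 + 1)))) := by gcongr
          _ = C1 * (4 * 3 ^ d) * (σ ^ 2 / N) * (E1 + 1) := by field_simp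
          _ ≤ C1 * (4 * 3 ^ d) * (σ ^ 2 / N) * (4 * E1 + 4 * Real.log N ^ 2) := by
              apply mul_le_mul_of_nonneg_left _ e4
              linarith
          _ ≤ C1 * (4 * 3 ^ d) * (σ ^ 2 / N) * (4 * E1 + 4 * Real.log N ^ 2) +
              C1 * (4 * 3 ^ d) * 4 * (σ ^ 2 / N) * L ^ (3 * (2 * (s:ℝ) - 1) / 4) := by linarith
          _ = _ := by rw [hE1]; ring
end

section
/- For every integer d ≥ 1 there exists a constant C_d > 0 depending only on d such that for all integers n₁,…,n_d ≥ 2 and all reals V > 0, t > 0, ε > 0, the set S(V,t) = {θ : I₀ → ℝ : V₂(θ) ≤ V and ‖θ‖₂ ≤ t} satisfies log N(ε, S(V,t)) ≤ log(2 + 2t·n^{1/2}/ε) + (2^d − 1)·log(2 + C_d·(t+V)·n^{1/2}/ε) + C_d + C_d·(V·n^{1/2}/ε)^{1/2} + C_d·(2^d + 1 + 2^d·V·n^{1/2}/ε)^{1/2}·(log(2^d + 1 + 2^d·V·n^{1/2}/ε))^{3(2d−1)/4}, where the net is with respect to the Euclidean norm on ℝ^{I₀}. -/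
open Finset MeasureTheory

/-- Euclidean distance on `ℝ^ι`. -/
noncomputable def eDist {ι : Type*} [Fintype ι] (θ η : ι → ℝ) : ℝ :=
  Real.sqrt (∑ i, (θ i - η i) ^ 2)

/-- `T` is an `ε`-net of `A` with respect to the distance function `dst`. -/
def IsNet {α : Type*} (dst : α → α → ℝ) (ε : ℝ) (A : Set α) (T : Finset α) : Prop :=
  ∀ a ∈ A, ∃ t ∈ T, dst a t ≤ ε


namespace MARS

/-- covering with log-cardinality bound -/
def Cov {E : Type*} [SeminormedAddCommGroup E] (A : Set E) (ε L : ℝ) : Prop :=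
  ∃ T : Finset E, (T.card : ℝ) ≤ Real.exp L ∧ ∀ a ∈ A, ∃ t ∈ T, ‖a - t‖ ≤ ε

lemma Cov.mono {E : Type*} [SeminormedAddCommGroup E] {A B : Set E} {ε L ε' L' : ℝ}
    (h : Cov A ε L) (hB : B ⊆ A) (hε : ε ≤ ε') (hL : L ≤ L') : Cov B ε' L' := by
  obtain ⟨T, h1, h2⟩ := h
  refine ⟨T, h1.trans (Real.exp_le_exp.2 hL), fun a ha => ?_⟩
  obtain ⟨t, ht, h3⟩ := h2 a (hB ha)
  exact ⟨t, ht, h3.trans hε⟩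

lemma Cov.add {E : Type*} [SeminormedAddCommGroup E] {A B : Set E} {ε L ε' L' : ℝ}
    (h : Cov A ε L) (h' : Cov B ε' L') :
    Cov {x | ∃ a ∈ A, ∃ b ∈ B, x = a + b} (ε + ε') (L + L') := by
  classical
  obtain ⟨T, h1, h2⟩ := h
  obtain ⟨T', h1', h2'⟩ := h'
  refine ⟨(T ×ˢ T').image (fun p => p.1 + p.2), ?_, ?_⟩
  · calc (((T ×ˢ T').image (fun p => p.1 + p.2)).card : ℝ) ≤ ((T ×ˢ T').card : ℝ) := by
          exact_mod_cast Finset.card_image_le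
      _ = T.card * T'.card := by rw [Finset.card_product]; push_cast; rfl
      _ ≤ Real.exp L * Real.exp L' := by gcongr
      _ = _ := (Real.exp_add _ _).symm
  · rintro x ⟨a, ha, b, hb, rfl⟩
    obtain ⟨t, ht, h3⟩ := h2 a ha
    obtain ⟨t', ht', h3'⟩ := h2' b hb
    refine ⟨t + t', Finset.mem_image.2 ⟨(t, t'), Finset.mem_product.2 ⟨ht, ht'⟩, rfl⟩, ?_⟩
    calc ‖a + b - (t + t')‖ = ‖(a - t) + (b - t')‖ := by congr 1; abel
      _ ≤ _ := norm_add_le _ _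
      _ ≤ _ := by gcongr

lemma Cov.sum {E ι : Type*} [SeminormedAddCommGroup E] (F : Finset ι) (A : ι → Set E)
    (ε L : ι → ℝ) (h : ∀ l ∈ F, Cov (A l) (ε l) (L l)) :
    Cov {x | ∃ f : ι → E, (∀ l ∈ F, f l ∈ A l) ∧ x = ∑ l ∈ F, f l}
      (∑ l ∈ F, ε l) (∑ l ∈ F, L l) := by
  classical
  induction F using Finset.induction_on with
  | empty =>
    refine ⟨{0}, by simp, ?_⟩
    rintro x ⟨f, -, rfl⟩
    exact ⟨0, by simp, by simp⟩
  | insert a s ha ih =>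
    rw [Finset.sum_insert ha, Finset.sum_insert ha]
    refine ((h a (by simp)).add (ih fun l hl => h l (by simp [hl]))).mono ?_ le_rfl le_rfl
    rintro x ⟨f, hf, rfl⟩
    exact ⟨f a, hf a (by simp), ∑ l ∈ s, f l, ⟨f, fun l hl => hf l (by simp [hl]), rfl⟩,
      Finset.sum_insert ha⟩

section maurey
variable {E : Type*} [NormedAddCommGroup E] [InnerProductSpace ℝ E]

/-- points of the symmetrized hull -/
def pt {ι : Type*} (v : ι → E) (W : ℝ) : Option (ι × Bool) → E
  | none => 0
  | some (i, true) => W • v i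
  | some (i, false) => -(W • v i)

lemma greedy {μ ι : Type*} (F : Finset μ) (b : μ → ℝ) (J : μ → ι) (v : ι → E) (W : ℝ)
    (hb : ∑ m ∈ F, |b m| ≤ W) (e : E) :
    ∃ o, inner ℝ e (pt v W o) ≤ inner ℝ e (∑ m ∈ F, b m • v (J m)) := by
  by_contra! H
  set x := ∑ m ∈ F, b m • v (J m) with hx
  set y : ℝ := inner ℝ e x with hy
  have h0 : y < 0 := by simpa [pt] using H none
  have hW : 0 ≤ W := le_trans (Finset.sum_nonneg fun _ _ => abs_nonneg _) hb
  have h1 : ∀ i, W * |inner ℝ e (v i)| < -y := by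
    intro i
    have a1 := H (some (i, true))
    have a2 := H (some (i, false))
    simp only [pt, inner_neg_right, inner_smul_right] at a1 a2
    rcases abs_cases (inner ℝ e (v i)) with ⟨h, _⟩ | ⟨h, _⟩ <;> rw [h] <;> linarith
  have hyx : y = ∑ m ∈ F, b m * inner ℝ e (v (J m)) := by
    rw [hy, hx, inner_sum]; simp [inner_smul_right]
  have hne : ∃ m ∈ F, b m ≠ 0 := by
    by_contra! hh
    have : y = 0 := by rw [hyx]; exact Finset.sum_eq_zero fun m hm => by rw [hh m hm, zero_mul]
    linarith
  have key : W * (-y) < W * (-y) := by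
    calc W * (-y) ≤ W * ∑ m ∈ F, |b m| * |inner ℝ e (v (J m))| := by
          gcongr
          rw [hyx, ← Finset.sum_neg_distrib]
          refine Finset.sum_le_sum fun m _ => ?_
          rw [← abs_mul]; exact neg_le_abs _
      _ = ∑ m ∈ F, |b m| * (W * |inner ℝ e (v (J m))|) := by
          rw [Finset.mul_sum]; exact Finset.sum_congr rfl fun _ _ => by ring
      _ < ∑ m ∈ F, |b m| * (-y) := by
          obtain ⟨m, hm, hm0⟩ := hne
          refine Finset.sum_lt_sum (fun m _ => ?_) ⟨m, hm, ?_⟩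
          · exact mul_le_mul_of_nonneg_left (h1 _).le (abs_nonneg _)
          · exact mul_lt_mul_of_pos_left (h1 _) (abs_pos.2 hm0)
      _ ≤ W * (-y) := by
          rw [← Finset.sum_mul]; exact mul_le_mul_of_nonneg_right hb (by linarith)
  exact lt_irrefl _ key

lemma hull_norm {μ ι : Type*} (F : Finset μ) (b : μ → ℝ) (J : μ → ι) (v : ι → E) (W r : ℝ)
    (hb : ∑ m ∈ F, |b m| ≤ W) (hr : 0 ≤ r) (hv : ∀ i, ‖v i‖ ≤ r) :
    ‖∑ m ∈ F, b m • v (J m)‖ ≤ W * r := by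
  calc ‖∑ m ∈ F, b m • v (J m)‖ ≤ ∑ m ∈ F, |b m| * r := by
        refine (norm_sum_le _ _).trans (Finset.sum_le_sum fun m _ => ?_)
        rw [norm_smul, Real.norm_eq_abs]
        exact mul_le_mul_of_nonneg_left (hv _) (abs_nonneg _)
    _ ≤ _ := by rw [← Finset.sum_mul]; exact mul_le_mul_of_nonneg_right hb hr

lemma greedy_seq {μ ι : Type*} (F : Finset μ) (b : μ → ℝ) (J : μ → ι) (v : ι → E) (W r : ℝ)
    (hb : ∑ m ∈ F, |b m| ≤ W) (hr : 0 ≤ r) (hv : ∀ i, ‖v i‖ ≤ r) (k : ℕ) :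
    ∃ s : Sym (Option (ι × Bool)) k,
      ‖(s.1.map (pt v W)).sum - (k : ℝ) • ∑ m ∈ F, b m • v (J m)‖ ^ 2 ≤ k * (2 * W * r) ^ 2 := by
  have hW : 0 ≤ W := le_trans (Finset.sum_nonneg fun _ _ => abs_nonneg _) hb
  induction k with
  | zero => exact ⟨Sym.nil, by simp⟩
  | succ k ih =>
    obtain ⟨s, hs⟩ := ih
    set x := ∑ m ∈ F, b m • v (J m) with hx
    set e := (s.1.map (pt v W)).sum - (k : ℝ) • x with he
    obtain ⟨o, ho⟩ := greedy F b J v W hb e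
    rw [← hx] at ho
    refine ⟨o ::ₛ s, ?_⟩
    have h1 : (((o ::ₛ s).1.map (pt v W)).sum - ((k + 1 : ℕ) : ℝ) • x) = e + (pt v W o - x) := by
      have : (o ::ₛ s).1 = o ::ₘ s.1 := rfl
      rw [this, Multiset.map_cons, Multiset.sum_cons, he]
      push_cast
      rw [add_smul, one_smul]; abel
    have h2 : ‖pt v W o‖ ≤ W * r := by
      rcases o with _ | ⟨i, _ | _⟩
      · simp [pt]; positivity
      all_goals
        simp only [pt, norm_neg, norm_smul, Real.norm_eq_abs, abs_of_nonneg hW]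
        exact mul_le_mul_of_nonneg_left (hv _) hW
    have h3 : ‖pt v W o - x‖ ≤ 2 * W * r := by
      have := hull_norm F b J v W r hb hr hv
      calc _ ≤ ‖pt v W o‖ + ‖x‖ := norm_sub_le _ _
        _ ≤ _ := by linarith
    rw [h1, norm_add_sq_real, inner_sub_right]
    have h4 : ‖pt v W o - x‖ ^ 2 ≤ (2 * W * r) ^ 2 := by gcongr
    push_cast
    linarith

lemma maurey {μ ι : Type*} [Fintype ι] (F : Finset μ) (J : μ → ι) (v : ι → E)
    (W r δ : ℝ) (hr : 0 ≤ r) (hδ : 0 ≤ δ) (hv : ∀ i, ‖v i‖ ≤ r) (k : ℕ) (hk : 0 < k)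
    (h : (2 * W * r) ^ 2 ≤ k * δ ^ 2) :
    Cov {x | ∃ b : μ → ℝ, ∑ m ∈ F, |b m| ≤ W ∧ x = ∑ m ∈ F, b m • v (J m)} δ
      (Real.log ((2 * Fintype.card ι + k).choose k)) := by
  classical
  have hc : 0 < (2 * Fintype.card ι + k).choose k := Nat.choose_pos (by omega)
  refine ⟨(Finset.univ : Finset (Sym (Option (ι × Bool)) k)).image
    (fun s => (k : ℝ)⁻¹ • (s.1.map (pt v W)).sum), ?_, ?_⟩
  · rw [Real.exp_log (by exact_mod_cast hc)]
    norm_cast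
    refine Finset.card_image_le.trans ?_
    rw [Finset.card_univ, Sym.card_sym_eq_choose]
    simp only [Fintype.card_option, Fintype.card_prod, Fintype.card_bool]
    exact le_of_eq (by congr 1; omega)
  · rintro x ⟨b, hb, rfl⟩
    obtain ⟨s, hs⟩ := greedy_seq F b J v W r hb hr hv k
    refine ⟨_, Finset.mem_image.2 ⟨s, Finset.mem_univ _, rfl⟩, ?_⟩
    have hk' : (0 : ℝ) < k := by exact_mod_cast hk
    set x := ∑ m ∈ F, b m • v (J m)
    set y := (s.1.map (pt v W)).sum
    have h1 : x - (k : ℝ)⁻¹ • y = -((k : ℝ)⁻¹ • (y - (k : ℝ) • x)) := by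
      rw [smul_sub, smul_smul, inv_mul_cancel₀ hk'.ne', one_smul]; abel
    rw [h1, norm_neg, norm_smul, norm_inv, Real.norm_natCast, inv_mul_le_iff₀ hk']
    refine abs_le_of_sq_le_sq' ?_ (by positivity) |>.2
    calc _ ≤ _ := hs
      _ ≤ k * (k * δ ^ 2) := by gcongr
      _ = _ := by ring

lemma hull_zero {μ ι : Type*} (F : Finset μ) (J : μ → ι) (v : ι → E)
    (W r : ℝ) (hr : 0 ≤ r) (hv : ∀ i, ‖v i‖ ≤ r) :
    Cov {x | ∃ b : μ → ℝ, ∑ m ∈ F, |b m| ≤ W ∧ x = ∑ m ∈ F, b m • v (J m)} (W * r) 0 := by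
  refine ⟨{0}, by simp, ?_⟩
  rintro x ⟨b, hb, rfl⟩
  exact ⟨0, by simp, by simpa using hull_norm F b J v W r hb hr hv⟩

end maurey

lemma log_choose (M k : ℕ) (hk : 0 < k) :
    Real.log ((M + k).choose k) ≤ k * (1 + Real.log (1 + M / k)) := by
  have hk' : (0 : ℝ) < k := by exact_mod_cast hk
  have h1 : ((M + k).choose k : ℝ) ≤ ((M + k : ℕ) : ℝ) ^ k / k.factorial := Nat.choose_le_pow_div _ _
  have h2 : (k : ℝ) ^ k / k.factorial ≤ Real.exp k := Real.pow_div_factorial_le_exp _ hk'.le _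
  have h3 : ((M + k).choose k : ℝ) ≤ Real.exp k * (1 + M / k) ^ k := by
    refine h1.trans ?_
    have : ((M + k : ℕ) : ℝ) = k * (1 + M / k) := by push_cast; field_simp; ring
    rw [this, mul_pow, mul_div_right_comm]
    gcongr
  have hc : 0 < (M + k).choose k := Nat.choose_pos (by omega)
  have hp : (0 : ℝ) < 1 + M / k := by positivity
  calc Real.log ((M + k).choose k) ≤ Real.log (Real.exp k * (1 + M / k) ^ k) :=
        Real.log_le_log (by exact_mod_cast hc) h3
    _ = k + k * Real.log (1 + M / k) := by
        rw [Real.log_mul (Real.exp_pos _).ne' (by positivity), Real.log_exp, Real.log_pow]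
    _ = _ := by ring

end MARS

namespace MARS

/-- normalised one-dimensional generators -/
noncomputable def gg (n m i : ℕ) : ℝ := if m = 0 then 1 else ((i - (m - 1) : ℕ) : ℝ) / n

lemma hat_zero (h a i : ℕ) (hi : i < a ∨ a + 2 * h ≤ i) :
    ((i - a : ℕ) : ℝ) - 2 * ((i - (a + h) : ℕ) : ℝ) + ((i - (a + 2 * h) : ℕ) : ℝ) = 0 := by
  rcases hi with hi | hi
  · rw [Nat.sub_eq_zero_of_le (by omega), Nat.sub_eq_zero_of_le (by omega),
      Nat.sub_eq_zero_of_le (by omega)]; simp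
  · rw [Nat.cast_sub (by omega), Nat.cast_sub (by omega), Nat.cast_sub (by omega)]
    push_cast; ring

lemma hat_bd (h a i : ℕ) :
    |((i - a : ℕ) : ℝ) - 2 * ((i - (a + h) : ℕ) : ℝ) + ((i - (a + 2 * h) : ℕ) : ℝ)| ≤ h := by
  rw [abs_le]
  have : -(h : ℤ) ≤ ((i - a : ℕ) : ℤ) - 2 * ((i - (a + h) : ℕ) : ℤ) + ((i - (a + 2 * h) : ℕ) : ℤ) ∧
    ((i - a : ℕ) : ℤ) - 2 * ((i - (a + h) : ℕ) : ℤ) + ((i - (a + 2 * h) : ℕ) : ℤ) ≤ h := by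
    omega
  exact_mod_cast this

/-- interpolant -/
noncomputable def interp (h q i : ℕ) : ℝ :=
  (1 - ((q % h : ℕ) : ℝ) / h) * ((i - h * (q / h) : ℕ) : ℝ)
    + ((q % h : ℕ) : ℝ) / h * ((i - (h * (q / h) + h) : ℕ) : ℝ)

noncomputable def cf (h q : ℕ) : ℝ :=
  if q % (2 * h) < h then -(((q % (2 * h) : ℕ) : ℝ) / (2 * h))
  else -(1 - ((q % (2 * h) : ℕ) : ℝ) / (2 * h))

lemma cf_bd (h q : ℕ) (hh : 0 < h) : |cf h q| ≤ 1 := by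
  have h1 : ((q % (2 * h) : ℕ) : ℝ) / (2 * h) ≤ 1 := by
    rw [div_le_one (by positivity)]
    exact_mod_cast (Nat.mod_lt q (by omega : 0 < 2 * h)).le
  have h2 : 0 ≤ ((q % (2 * h) : ℕ) : ℝ) / (2 * h) := by positivity
  unfold cf
  split_ifs <;> rw [abs_le] <;> constructor <;> linarith

lemma interp_diff (h q i : ℕ) (hh : 0 < h) :
    interp h q i - interp (2 * h) q i = cf h q *
      (((i - 2 * h * (q / (2 * h)) : ℕ) : ℝ) - 2 * ((i - (2 * h * (q / (2 * h)) + h) : ℕ) : ℝ)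
        + ((i - (2 * h * (q / (2 * h)) + 2 * h) : ℕ) : ℝ)) := by
  have hq := Nat.div_add_mod q (2 * h)
  have hlt := Nat.mod_lt q (by omega : 0 < 2 * h)
  set A := q / (2 * h) with hA
  set ρ := q % (2 * h) with hρ
  have hh' : (h : ℝ) ≠ 0 := by positivity
  unfold interp cf
  rw [← hρ, ← hA]
  clear_value A ρ
  by_cases hc : ρ < h
  · have e1 : q / h = 2 * A := by
      rw [← hq, show 2 * h * A + ρ = ρ + h * (2 * A) by ring, Nat.add_mul_div_left _ _ hh,
        Nat.div_eq_of_lt hc]; simp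
    have e2 : q % h = ρ := by
      rw [← hq, show 2 * h * A + ρ = ρ + h * (2 * A) by ring, Nat.add_mul_mod_self_left,
        Nat.mod_eq_of_lt hc]
    rw [e1, e2, if_pos hc, show h * (2 * A) = 2 * h * A by ring]
    push_cast
    field_simp
    ring
  · obtain ⟨σ, rfl⟩ : ∃ σ, ρ = h + σ := ⟨ρ - h, by omega⟩
    have hc' : σ < h := by omega
    have e1 : q / h = 2 * A + 1 := by
      rw [← hq, show 2 * h * A + (h + σ) = σ + h * (2 * A + 1) by ring, Nat.add_mul_div_left _ _ hh,
        Nat.div_eq_of_lt hc']; simp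
    have e2 : q % h = σ := by
      rw [← hq, show 2 * h * A + (h + σ) = σ + h * (2 * A + 1) by ring, Nat.add_mul_mod_self_left,
        Nat.mod_eq_of_lt hc']
    rw [e1, e2, if_neg hc, show h * (2 * A + 1) = 2 * h * A + h by ring,
      show 2 * h * A + h + h = 2 * h * A + 2 * h by ring]
    push_cast
    field_simp
    ring

lemma interp_one (q i : ℕ) : interp 1 q i = ((i - q : ℕ) : ℝ) := by
  simp [interp, Nat.mod_one]

lemma interp_top (H q i : ℕ) (hq : q < H) (hi : i < H) :
    interp H q i = (1 - (q : ℝ) / H) * i := by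
  simp [interp, Nat.mod_eq_of_lt hq, Nat.div_eq_of_lt hq, Nat.sub_eq_zero_of_le hi.le]

noncomputable def psi (n L : ℕ) : ℕ → ℕ → ℕ → ℝ
  | 0, j, i => if j = 0 then 1 else (i : ℝ) / n
  | l + 1, j, i => (((i - 2 * 2 ^ (L - (l + 1)) * j : ℕ) : ℝ)
      - 2 * ((i - (2 * 2 ^ (L - (l + 1)) * j + 2 ^ (L - (l + 1))) : ℕ) : ℝ)
        + ((i - (2 * 2 ^ (L - (l + 1)) * j + 2 * 2 ^ (L - (l + 1))) : ℕ) : ℝ)) / n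

noncomputable def cc (L : ℕ) : ℕ → ℕ → ℝ
  | 0, m => if m = 0 then 1 else if m - 1 < 2 ^ L then 1 - ((m - 1 : ℕ) : ℝ) / (2 ^ L : ℕ) else 0
  | l + 1, m => if m = 0 then 0 else cf (2 ^ (L - (l + 1))) (m - 1)

def AA (L : ℕ) : ℕ → ℕ → ℕ
  | 0, m => if m = 0 then 0 else 1
  | l + 1, m => ((m - 1) / (2 * 2 ^ (L - (l + 1)))) % (2 ^ (l + 1 + 1))

lemma interp_sum (L q i : ℕ) (K : ℕ) (hK : K ≤ L) :
    interp (2 ^ L) q i + ∑ l ∈ range K, (interp (2 ^ (L - (l + 1))) q i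
      - interp (2 * 2 ^ (L - (l + 1))) q i) = interp (2 ^ (L - K)) q i := by
  induction K with
  | zero => simp
  | succ K ih =>
    rw [Finset.sum_range_succ, ← add_assoc, ih (by omega), ← pow_succ',
      show L - (K + 1) + 1 = L - K by omega]
    ring

lemma psi_repr (n : ℕ) (L : ℕ) (hL : n ≤ 2 ^ L) (m i : ℕ) (hm : m < n) (hi : i < n) :
    gg n m i = ∑ l ∈ range (L + 1), cc L l m * psi n L l (AA L l m) i := by
  rw [Finset.sum_range_succ']
  rcases m with _ | q
  · simp [gg, cc, AA, psi]
  · have h1 := interp_sum L q i L le_rfl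
    have hq : q < 2 ^ L := by omega
    rw [interp_top _ _ _ hq (by omega), Nat.sub_self, pow_zero, interp_one] at h1
    simp only [gg, cc, AA, psi, Nat.add_sub_cancel, Nat.add_one_ne_zero, if_false, hq, if_true,
      one_ne_zero]
    rw [← h1, add_comm, add_div, mul_div_assoc, Finset.sum_div]
    congr 1
    refine Finset.sum_congr rfl fun l hl => ?_
    have hl' : l < L := by simpa using hl
    have hA : q / (2 * 2 ^ (L - (l + 1))) % 2 ^ (l + 1 + 1) = q / (2 * 2 ^ (L - (l + 1))) := by
      apply Nat.mod_eq_of_lt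
      rw [Nat.div_lt_iff_lt_mul (by positivity)]
      calc q < 2 ^ L := hq
        _ ≤ 2 ^ (l + 1 + 1 + (1 + (L - (l + 1)))) := Nat.pow_le_pow_right (by norm_num) (by omega)
        _ = _ := by rw [pow_add, pow_add 2 1]; ring
    rw [hA, interp_diff _ _ _ (by positivity), mul_div_assoc]

lemma psi_norm (n : ℕ) (hn : 0 < n) (L : ℕ) (hL : 2 ^ L ≤ 2 * n) (l : ℕ) (hl : l ≤ L) (j : ℕ) :
    ∑ i ∈ range n, psi n L l j i ^ 2 ≤ 16 * n / 8 ^ l := by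
  have hn' : (0 : ℝ) < n := by exact_mod_cast hn
  rcases l with _ | l
  · have : ∀ i ∈ range n, psi n L 0 j i ^ 2 ≤ 1 := by
      intro i hi
      have hi : i < n := by simpa using hi
      simp only [psi]
      split_ifs
      · simp
      · have : (i : ℝ) / n ≤ 1 := by rw [div_le_one hn']; exact_mod_cast hi.le
        exact pow_le_one₀ (by positivity) this
    calc _ ≤ ∑ i ∈ range n, (1 : ℝ) := Finset.sum_le_sum this
      _ ≤ _ := by simp; linarith
  · set h := 2 ^ (L - (l + 1)) with hh
    have h2 : (h : ℝ) * 2 ^ (l + 1) ≤ 2 * n := by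
      have : h * 2 ^ (l + 1) = 2 ^ L := by rw [hh, ← pow_add]; congr 1; omega
      rw [← this] at hL; exact_mod_cast hL
    calc ∑ i ∈ range n, psi n L (l + 1) j i ^ 2
        ≤ ∑ i ∈ range n, (if i ∈ Finset.Ico (2 * h * j) (2 * h * j + 2 * h)
            then ((h : ℝ) / n) ^ 2 else 0) := by
          refine Finset.sum_le_sum fun i _ => ?_
          simp only [psi, ← hh]
          split_ifs with hi
          · rw [← sq_abs, abs_div, abs_of_pos hn']
            gcongr
            exact hat_bd _ _ _
          · rw [hat_zero h (2 * h * j) i (by simp at hi; omega)]; simp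
      _ = ∑ i ∈ (range n).filter (· ∈ Finset.Ico (2 * h * j) (2 * h * j + 2 * h)),
            ((h : ℝ) / n) ^ 2 := by rw [Finset.sum_filter]
      _ ≤ ∑ i ∈ Finset.Ico (2 * h * j) (2 * h * j + 2 * h), ((h : ℝ) / n) ^ 2 := by
          refine Finset.sum_le_sum_of_subset_of_nonneg ?_ fun _ _ _ => by positivity
          intro i hi; exact (Finset.mem_filter.1 hi).2
      _ = 2 * h * ((h : ℝ) / n) ^ 2 := by simp
      _ ≤ 16 * n / 8 ^ (l + 1) := by
          rw [le_div_iff₀ (by positivity), show (8 : ℝ) = 2 ^ 3 by norm_num, ← pow_mul, mul_comm 3,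
            pow_mul, div_pow, mul_div_assoc', div_mul_eq_mul_div, div_le_iff₀ (by positivity)]
          calc 2 * (h : ℝ) * (h : ℝ) ^ 2 * ((2 : ℝ) ^ (l + 1)) ^ 3
                = 2 * ((h : ℝ) * 2 ^ (l + 1)) ^ 3 := by ring
            _ ≤ 2 * (2 * (n : ℝ)) ^ 3 := by gcongr
            _ = _ := by ring

lemma oneD (n : ℕ) (hn : 0 < n) : ∃ (L : ℕ) (ψ : ℕ → ℕ → ℕ → ℝ) (c : ℕ → ℕ → ℝ) (A : ℕ → ℕ → ℕ),
    (∀ l m, |c l m| ≤ 1) ∧ (∀ l m, A l m < 2 ^ (l + 1)) ∧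
    (∀ m < n, ∀ i < n, gg n m i = ∑ l ∈ range (L + 1), c l m * ψ l (A l m) i) ∧
    (∀ l ≤ L, ∀ j, ∑ i ∈ range n, ψ l j i ^ 2 ≤ 16 * n / 8 ^ l) := by
  obtain ⟨L, h1, h2⟩ : ∃ L, n ≤ 2 ^ L ∧ 2 ^ L ≤ 2 * n := by
    refine ⟨Nat.log 2 n + 1, (Nat.lt_pow_succ_log_self (by norm_num) n).le, ?_⟩
    rw [pow_succ']
    exact Nat.mul_le_mul_left _ (Nat.pow_log_le_self 2 hn.ne')
  refine ⟨L, psi n L, cc L, AA L, ?_, ?_, fun m hm i hi => psi_repr n L h1 m i hm hi,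
    fun l hl j => psi_norm n hn L h2 l hl j⟩
  · intro l m
    rcases l with _ | l
    · simp only [cc]
      split_ifs with h h'
      · simp
      · have a1 : ((m - 1 : ℕ) : ℝ) / (2 ^ L : ℕ) ≤ 1 := by
          rw [div_le_one (by positivity)]; exact_mod_cast h'.le
        have a2 : 0 ≤ ((m - 1 : ℕ) : ℝ) / (2 ^ L : ℕ) := by positivity
        rw [abs_le]; constructor <;> linarith
      · simp
    · simp only [cc]
      split_ifs
      · simp
      · exact cf_bd _ _ (by positivity)
  · intro l m
    rcases l with _ | l
    · simp only [AA]; split_ifs <;> norm_num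
    · exact Nat.mod_lt _ (by positivity)

end MARS
namespace MARS

lemma log_pow_two_bd (a : ℝ) (p : ℕ) (ha : 0 ≤ a) (h : a ≤ 2 ^ p) :
    Real.log (1 + a) ≤ p + 1 := by
  have h2 : Real.log 2 ≤ 1 := by have := Real.log_two_lt_d9; linarith
  calc Real.log (1 + a) ≤ Real.log (2 ^ (p + 1)) := by
        apply Real.log_le_log (by positivity)
        have : (1 : ℝ) ≤ 2 ^ p := one_le_pow₀ (by norm_num)
        rw [pow_succ]; linarith
    _ = (p + 1 : ℕ) * Real.log 2 := by rw [Real.log_pow]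
    _ ≤ (p + 1 : ℕ) * 1 := by gcongr
    _ = _ := by push_cast; ring

/-- distance of naturals -/
def dd (s s0 : ℕ) : ℕ := (s - s0) + (s0 - s)

lemma block {E : Type*} [NormedAddCommGroup E] [InnerProductSpace ℝ E] {μ ι : Type*} [Fintype ι]
    (d s s0 : ℕ) (hcard : Fintype.card ι = 2 ^ (s + d)) (F : Finset μ) (J : μ → ι) (v : ι → E)
    (W n : ℝ) (hW : 0 ≤ W) (hn : 0 ≤ n) (hv : ∀ i, ‖v i‖ ^ 2 ≤ 16 ^ d * n / 8 ^ s) :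
    Cov {x | ∃ b : μ → ℝ, ∑ m ∈ F, |b m| ≤ W ∧ x = ∑ m ∈ F, b m • v (J m)}
      (2 * 4 ^ d * W * √n * (1 / 4) ^ s0 * (1 / 2) ^ (dd s s0))
      (12 * 2 ^ d * (d + 3) * 2 ^ s0 * ((1 / 2) ^ (dd s s0) * (1 + (dd s s0 : ℕ)))) := by
  set r := √(16 ^ d * n / 8 ^ s) with hr
  have hr0 : 0 ≤ r := Real.sqrt_nonneg _
  have hr2 : r ^ 2 = 16 ^ d * n / 8 ^ s := Real.sq_sqrt (by positivity)
  have hv' : ∀ i, ‖v i‖ ≤ r := fun i => Real.le_sqrt_of_sq_le (hv i)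
  set δ := 2 * 4 ^ d * W * √n * (1 / 4) ^ s0 * (1 / 2) ^ (dd s s0) with hδ
  have hδ0 : 0 ≤ δ := by positivity
  have hδ2 : δ ^ 2 = 4 * W ^ 2 * 16 ^ d * n / (16 ^ s0 * 4 ^ (dd s s0)) := by
    rw [hδ]
    have e1 : (√n) ^ 2 = n := Real.sq_sqrt hn
    have e2 : ((4 : ℝ) ^ d) ^ 2 = 16 ^ d := by rw [← pow_mul, mul_comm, pow_mul]; norm_num
    have e3 : (((1 : ℝ) / 4) ^ s0) ^ 2 = 1 / 16 ^ s0 := by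
      rw [← pow_mul, mul_comm, pow_mul]; norm_num [div_pow]
    have e4 : (((1 : ℝ) / 2) ^ (dd s s0)) ^ 2 = 1 / 4 ^ (dd s s0) := by
      rw [← pow_mul, mul_comm, pow_mul]; norm_num [div_pow]
    rw [mul_pow, mul_pow, mul_pow, mul_pow, mul_pow, e1, e2, e3, e4]
    field_simp
    ring
  -- sufficient condition
  have suff : ∀ k : ℕ, (16 : ℝ) ^ s0 * 4 ^ (dd s s0) ≤ k * 8 ^ s → (2 * W * r) ^ 2 ≤ k * δ ^ 2 := by
    intro k hk
    rw [mul_pow, hr2, hδ2, mul_div_assoc', mul_div_assoc', div_le_div_iff₀ (by positivity)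
      (by positivity)]
    have : 0 ≤ 4 * W ^ 2 * 16 ^ d * n := by positivity
    calc (2 * W) ^ 2 * (16 ^ d * n) * (16 ^ s0 * 4 ^ dd s s0)
        = 4 * W ^ 2 * 16 ^ d * n * (16 ^ s0 * 4 ^ dd s s0) := by ring
      _ ≤ 4 * W ^ 2 * 16 ^ d * n * (k * 8 ^ s) := by gcongr
      _ = _ := by ring
  have p16 : ∀ a : ℕ, (16 : ℝ) ^ a = 2 ^ (4 * a) := fun a => by rw [pow_mul]; norm_num
  have p4 : ∀ a : ℕ, (4 : ℝ) ^ a = 2 ^ (2 * a) := fun a => by rw [pow_mul]; norm_num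
  have p8 : ∀ a : ℕ, (8 : ℝ) ^ a = 2 ^ (3 * a) := fun a => by rw [pow_mul]; norm_num
  have h2d : (1 : ℝ) ≤ 2 ^ d := one_le_pow₀ (by norm_num)
  rcases le_or_gt s s0 with hs | hs
  · obtain ⟨x, rfl⟩ := Nat.exists_eq_add_of_le hs
    have hx : dd s (s + x) = x := by unfold dd; omega
    rw [hx] at suff ⊢
    have hk := maurey F J v W r δ hr0 hδ0 hv' (2 ^ (s + 6 * x)) (by positivity) (suff _ (by
      push_cast
      rw [p16, p4, p8, ← pow_add, ← pow_add]
      exact pow_le_pow_right₀ (by norm_num) (by omega)))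
    refine hk.mono le_rfl le_rfl ?_
    rw [hcard, ← Nat.choose_symm_add, Nat.add_comm]
    refine (log_choose _ _ (by positivity)).trans ?_
    push_cast
    have h1 : Real.log (1 + (2 : ℝ) ^ (s + 6 * x) / (2 * 2 ^ (s + d))) ≤ (6 * x : ℕ) + 1 := by
      apply log_pow_two_bd _ _ (by positivity)
      rw [div_le_iff₀ (by positivity), pow_add, pow_add]
      have : (0 : ℝ) < 2 ^ s * 2 ^ (6 * x) := by positivity
      nlinarith
    have e : (2 : ℝ) ^ (s + x) * (1 / 2) ^ x = 2 ^ s := by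
      rw [pow_add, mul_assoc, ← mul_pow]; norm_num
    calc _ ≤ 2 * (2 : ℝ) ^ (s + d) * (1 + ((6 * x : ℕ) + 1)) := by gcongr
      _ ≤ 2 * (2 : ℝ) ^ (s + d) * (6 * (1 + x) * (d + 3)) := by
          gcongr; push_cast
          nlinarith [(Nat.cast_nonneg x : (0 : ℝ) ≤ x), (Nat.cast_nonneg d : (0 : ℝ) ≤ d), mul_nonneg (Nat.cast_nonneg x : (0 : ℝ) ≤ x) (Nat.cast_nonneg d : (0 : ℝ) ≤ d)]
      _ = 12 * 2 ^ d * (d + 3) * (2 ^ (s + x) * (1 / 2) ^ x) * (1 + x) := by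
          rw [e, pow_add]; ring
      _ = _ := by ring
  · obtain ⟨x, rfl⟩ := Nat.exists_eq_add_of_le hs.le
    have hx : dd (s0 + x) s0 = x := by unfold dd; omega
    rw [hx] at suff hδ2 ⊢
    rcases le_or_gt x s0 with hx0 | hx0
    · obtain ⟨y, rfl⟩ := Nat.exists_eq_add_of_le hx0
      have hk := maurey F J v W r δ hr0 hδ0 hv' (2 ^ y) (by positivity) (suff _ (by
        push_cast
        rw [p16, p4, p8, ← pow_add, ← pow_add]
        exact pow_le_pow_right₀ (by norm_num) (by omega)))
      refine hk.mono le_rfl le_rfl ?_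
      rw [hcard]
      refine (log_choose _ _ (by positivity)).trans ?_
      push_cast
      have h1 : Real.log (1 + (2 * (2 : ℝ) ^ (x + y + x + d)) / 2 ^ y) ≤ (2 * x + d + 1 : ℕ) + 1 := by
        apply log_pow_two_bd _ _ (by positivity)
        rw [div_le_iff₀ (by positivity), ← pow_succ', ← pow_add]
        exact pow_le_pow_right₀ (by norm_num) (by omega)
      have e : (2 : ℝ) ^ (x + y) * (1 / 2) ^ x = 2 ^ y := by
        rw [pow_add, mul_comm, ← mul_assoc, ← mul_pow]; norm_num
      calc _ ≤ (2 : ℝ) ^ y * (1 + ((2 * x + d + 1 : ℕ) + 1)) := by gcongr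
        _ ≤ (2 : ℝ) ^ y * ((d + 3) * (1 + x)) := by
            gcongr; push_cast
            nlinarith [(Nat.cast_nonneg x : (0 : ℝ) ≤ x), (Nat.cast_nonneg d : (0 : ℝ) ≤ d), mul_nonneg (Nat.cast_nonneg x : (0 : ℝ) ≤ x) (Nat.cast_nonneg d : (0 : ℝ) ≤ d)]
        _ ≤ (12 * 2 ^ d) * ((2 : ℝ) ^ y * ((d + 3) * (1 + x))) := by
            apply le_mul_of_one_le_left (by positivity); linarith
        _ = 12 * 2 ^ d * (d + 3) * (2 ^ (x + y) * (1 / 2) ^ x) * (1 + x) := by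
            rw [e]; ring
        _ = _ := by ring
    · refine (hull_zero F J v W r hr0 hv').mono le_rfl ?_ (by positivity)
      refine abs_le_of_sq_le_sq' ?_ hδ0 |>.2
      rw [hδ2, mul_pow, hr2, mul_div_assoc', div_le_div_iff₀ (by positivity) (by positivity)]
      have : (16 : ℝ) ^ s0 * 4 ^ x ≤ 4 * 8 ^ (s0 + x) := by
        rw [p16, p4, p8, ← pow_add]
        have : (2 : ℝ) ^ (4 * s0 + 2 * x) ≤ 2 ^ (3 * (s0 + x)) :=
          pow_le_pow_right₀ (by norm_num) (by omega)
        have : (0 : ℝ) ≤ 2 ^ (3 * (s0 + x)) := by positivity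
        linarith
      calc W ^ 2 * (16 ^ d * n) * (16 ^ s0 * 4 ^ x)
          ≤ W ^ 2 * (16 ^ d * n) * (4 * 8 ^ (s0 + x)) := by gcongr
        _ = _ := by ring

/-- the constant in the level sum -/
noncomputable def Kc (e : ℕ) : ℝ := ∑' x : ℕ, (1 + (x : ℝ)) ^ (e + 1) * (1 / 2) ^ x

lemma Kc_summable (e : ℕ) : Summable fun x : ℕ => (1 + (x : ℝ)) ^ (e + 1) * (1 / 2) ^ x := by
  have h := summable_pow_mul_geometric_of_norm_lt_one (R := ℝ) (e + 1) (r := 1 / 2) (by norm_num)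
  have h2 := ((summable_nat_add_iff 1).2 h).mul_left 2
  refine h2.congr fun x => ?_
  push_cast
  rw [pow_succ (1 / 2 : ℝ) x, add_comm (1 : ℝ) x]; ring

lemma Kc_nonneg (e : ℕ) : 0 ≤ Kc e := tsum_nonneg fun _ => by positivity

lemma sum_dd (e S s0 : ℕ) :
    ∑ s ∈ range S, ((s : ℝ) + 1) ^ e * ((1 / 2) ^ (dd s s0) * (1 + (dd s s0 : ℕ)))
      ≤ 2 * Kc e * (s0 + 1) ^ e := by
  set f : ℕ → ℝ := fun x : ℕ => (1 + (x : ℝ)) ^ (e + 1) * (1 / 2) ^ x with hf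
  have hf0 : ∀ x, 0 ≤ f x := fun x => by positivity
  have h1 : ∀ s : ℕ, ((s : ℝ) + 1) ^ e * ((1 / 2) ^ (dd s s0) * (1 + (dd s s0 : ℕ)))
      ≤ (s0 + 1) ^ e * f (dd s s0) := by
    intro s
    have : (s : ℝ) + 1 ≤ (s0 + 1) * (1 + (dd s s0 : ℕ)) := by
      have : s + 1 ≤ (s0 + 1) * (1 + dd s s0) := by
        have : s ≤ s0 + dd s s0 := by unfold dd; omega
        nlinarith
      exact_mod_cast this
    calc _ ≤ ((s0 + 1) * (1 + ((dd s s0 : ℕ) : ℝ))) ^ e * ((1 / 2) ^ (dd s s0) * (1 + (dd s s0 : ℕ))) := by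
          gcongr
      _ = _ := by simp only [hf]; rw [mul_pow]; ring
  have hsum : ∀ A : Finset ℕ, Set.InjOn (fun s => dd s s0) A → ∑ s ∈ A, f (dd s s0) ≤ Kc e := by
    intro A hA
    rw [← Finset.sum_image (f := f) hA]
    exact (Kc_summable e).sum_le_tsum _ fun x _ => hf0 x
  calc _ ≤ ∑ s ∈ range S, ((s0 : ℝ) + 1) ^ e * f (dd s s0) := Finset.sum_le_sum fun s _ => h1 s
    _ = ((s0 : ℝ) + 1) ^ e * (∑ s ∈ (range S).filter (· ≤ s0), f (dd s s0)
          + ∑ s ∈ (range S).filter (¬ · ≤ s0), f (dd s s0)) := by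
        rw [Finset.sum_filter_add_sum_filter_not, Finset.mul_sum]
    _ ≤ ((s0 : ℝ) + 1) ^ e * (Kc e + Kc e) := by
        gcongr
        · apply hsum; intro a ha b hb hab; simp [dd] at ha hb hab; omega
        · apply hsum; intro a ha b hb hab; simp [dd] at ha hb hab; omega
    _ = _ := by ring

lemma level_sum (e s0 : ℕ) (L : Fin (e + 1) → ℕ) :
    ∑ l ∈ Fintype.piFinset (fun k => range (L k)),
      ((1 / 2 : ℝ) ^ (dd (∑ k, l k) s0) * (1 + (dd (∑ k, l k) s0 : ℕ)))
      ≤ 2 * Kc e * (s0 + 1) ^ e := by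
  set P := Fintype.piFinset (fun k => range (L k)) with hP
  set S := P.sup (fun l => ∑ k, l k) + 1 with hS
  have hmaps : ∀ l ∈ P, (∑ k, l k) ∈ range S := by
    intro l hl
    rw [Finset.mem_range, hS]
    exact Nat.lt_succ_of_le (Finset.le_sup (f := fun l : Fin (e + 1) → ℕ => ∑ k, l k) hl)
  rw [← Finset.sum_fiberwise_of_maps_to hmaps]
  refine le_trans (Finset.sum_le_sum fun s _ => ?_) (sum_dd e S s0)
  have hc : (P.filter (fun l => ∑ k, l k = s)).card ≤ (s + 1) ^ e := by
    have : (Fintype.piFinset fun _ : Fin e => range (s + 1)).card = (s + 1) ^ e := by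
      simp [Fintype.card_piFinset]
    rw [← this]
    refine Finset.card_le_card_of_injOn (fun l => Fin.tail l) ?_ ?_
    · intro l hl
      have hl : l ∈ P ∧ ∑ k, l k = s := by simpa using hl
      simp only [Finset.mem_coe, Fintype.mem_piFinset, Finset.mem_range, Fin.tail]
      intro k
      have := Finset.single_le_sum (f := l) (fun _ _ => Nat.zero_le _) (Finset.mem_univ k.succ)
      omega
    · intro l hl l' hl' h
      have hl : l ∈ P ∧ ∑ k, l k = s := by simpa using hl
      have hl' : l' ∈ P ∧ ∑ k, l' k = s := by simpa using hl'
      have h0 : ∀ k : Fin e, l k.succ = l' k.succ := fun k => congrFun h k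
      have a1 := hl.2
      have a2 := hl'.2
      rw [Fin.sum_univ_succ] at a1 a2
      simp only [h0] at a1
      funext k
      refine Fin.cases ?_ (fun k => h0 k) k
      omega
  calc _ = ∑ l ∈ P.filter (fun l => ∑ k, l k = s),
        ((1 / 2 : ℝ) ^ (dd s s0) * (1 + (dd s s0 : ℕ))) := by
        refine Finset.sum_congr rfl fun l hl => ?_
        rw [(Finset.mem_filter.1 hl).2]
    _ = ((P.filter (fun l => ∑ k, l k = s)).card : ℝ) *
        ((1 / 2 : ℝ) ^ (dd s s0) * (1 + (dd s s0 : ℕ))) := by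
        rw [Finset.sum_const, nsmul_eq_mul]
    _ ≤ _ := by
        gcongr
        exact_mod_cast hc

end MARS
namespace MARS

/-- unnormalised generators -/
noncomputable def ph (m i : ℕ) : ℝ := if m = 0 then 1 else ((i - (m - 1) : ℕ) : ℝ)

/-- truncation at two -/
def be (m : ℕ) : ℕ := min m 2

noncomputable def D1 (u : ℕ → ℝ) (m : ℕ) : ℝ :=
  ∑ δ ∈ range (be m + 1), ((-1 : ℝ) ^ δ * ((be m).choose δ : ℝ)) * u (m - δ)

lemma D1_zero (u : ℕ → ℝ) : D1 u 0 = u 0 := by simp [D1, be]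
lemma D1_one (u : ℕ → ℝ) : D1 u 1 = u 1 - u 0 := by
  simp [D1, be, Finset.sum_range_succ]; ring
lemma D1_two (u : ℕ → ℝ) (m : ℕ) : D1 u (m + 2) = u (m + 2) - 2 * u (m + 1) + u m := by
  simp [D1, be, Finset.sum_range_succ, Nat.choose]; ring

lemma taylor (u : ℕ → ℝ) (i N : ℕ) (h : N + 1 ≤ i) :
    ∑ m ∈ range (N + 2), ph m i * D1 u m = u (N + 1) + ((i : ℝ) - N - 1) * (u (N + 1) - u N) := by
  induction N with
  | zero => simp [Finset.sum_range_succ, D1_zero, D1_one, ph]; ring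
  | succ N ih =>
    rw [Finset.sum_range_succ, ih (by omega), D1_two]
    simp only [ph, Nat.add_eq_zero_iff, OfNat.ofNat_ne_zero, and_false, if_false]
    rw [show N + 2 - 1 = N + 1 by omega, Nat.cast_sub (by omega)]
    push_cast; ring

lemma repr1 (u : ℕ → ℝ) (n i : ℕ) (hi : i < n) : ∑ m ∈ range n, ph m i * D1 u m = u i := by
  have h1 : ∑ m ∈ range n, ph m i * D1 u m = ∑ m ∈ range (i + 1), ph m i * D1 u m := by
    symm
    apply Finset.sum_subset
    · intro m hm; simp at hm ⊢; omega
    · intro m _ hm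
      have hm : i < m := by simpa using hm
      rw [ph, if_neg (by omega), Nat.sub_eq_zero_of_le (by omega)]; simp
  rw [h1]
  rcases i with _ | i
  · simp [D1_zero, ph]
  · rw [taylor u (i + 1) i le_rfl]; push_cast; ring

lemma repr (d : ℕ) (n : Fin d → ℕ) (θ : (Fin d → ℕ) → ℝ) (i : Fin d → ℕ)
    (hi : i ∈ Fintype.piFinset fun k => range (n k)) :
    θ i = ∑ m ∈ Fintype.piFinset (fun k => range (n k)),
      mixedDiff d (fun k => be (m k)) θ m * ∏ k, ph (m k) (i k) := by
  set I := Fintype.piFinset fun k => range (n k) with hI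
  have h1 : ∀ m ∈ I, mixedDiff d (fun k => be (m k)) θ m =
      ∑ j ∈ I, θ j * ∏ k, D1 (fun a => if a = j k then 1 else 0) (m k) := by
    intro m hm
    simp only [D1, Finset.prod_univ_sum, mixedDiff, Finset.mul_sum]
    rw [Finset.sum_comm]
    refine Finset.sum_congr rfl fun δ _ => ?_
    rw [Finset.sum_eq_single (fun k => m k - δ k)]
    · simp only [if_true, mul_one, Finset.prod_mul_distrib, Finset.prod_pow_eq_pow_sum]
      ring
    · intro j _ hj
      obtain ⟨k, hk⟩ : ∃ k, m k - δ k ≠ j k := by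
        by_contra! hh; exact hj (funext fun k => (hh k).symm)
      rw [Finset.prod_eq_zero (Finset.mem_univ k), mul_zero]
      simp [hk]
    · intro hn
      exfalso; apply hn
      rw [hI, Fintype.mem_piFinset] at hm ⊢
      intro k
      have := hm k
      simp at this ⊢; omega
  rw [Finset.sum_congr rfl fun m hm => by rw [h1 m hm, Finset.sum_mul], Finset.sum_comm]
  have h2 : ∀ j ∈ I, ∑ m ∈ I, (θ j * ∏ k, D1 (fun a => if a = j k then 1 else 0) (m k)) *
      ∏ k, ph (m k) (i k) = θ j * if j = i then 1 else 0 := by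
    intro j _
    have e : ∀ m ∈ I, (θ j * ∏ k, D1 (fun a => if a = j k then 1 else 0) (m k)) *
      ∏ k, ph (m k) (i k) = θ j * ∏ k, (ph (m k) (i k) * D1 (fun a => if a = j k then 1 else 0) (m k)) := by
      intro m _
      rw [Finset.prod_mul_distrib]; ring
    rw [Finset.sum_congr rfl e, ← Finset.mul_sum, hI,
      ← Finset.prod_univ_sum (fun k => range (n k))
        (fun k a => ph a (i k) * D1 (fun a => if a = j k then 1 else 0) a)]
    congr 1
    rw [Finset.prod_congr rfl fun k _ => repr1 _ (n k) (i k) (by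
      have := (Fintype.mem_piFinset.1 hi) k; simpa using this)]
    split_ifs with h
    · simp [h]
    · obtain ⟨k, hk⟩ : ∃ k, i k ≠ j k := by
        by_contra! hh; exact h (funext fun k => (hh k).symm)
      exact Finset.prod_eq_zero (Finset.mem_univ k) (by simp [hk])
  rw [Finset.sum_congr rfl h2]
  simp [hi]

lemma V2_ge (d : ℕ) (n : Fin d → ℕ) (θ : (Fin d → ℕ) → ℝ) :
    ∑ m ∈ (Fintype.piFinset (fun k => range (n k))).filter (fun m => ∃ k, 2 ≤ m k),
      (∏ k, (n k : ℝ) ^ (min (m k) 1)) * |mixedDiff d (fun k => be (m k)) θ m| ≤ V2 d n θ := by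
  have hmaps : ∀ m ∈ (Fintype.piFinset (fun k => range (n k))).filter (fun m => ∃ k, 2 ≤ m k),
      (fun k => be (m k)) ∈ (Fintype.piFinset fun _ : Fin d => Finset.range 3).filter
        (fun β => Finset.univ.sup β = 2) := by
    intro m hm
    obtain ⟨hm, k, hk⟩ := Finset.mem_filter.1 hm
    refine Finset.mem_filter.2 ⟨?_, ?_⟩
    · rw [Fintype.mem_piFinset]; intro k; simp [be]
    · apply le_antisymm
      · exact Finset.sup_le fun k _ => by simp [be]
      · calc 2 ≤ be (m k) := by simp [be, hk]
          _ ≤ _ := Finset.le_sup (f := fun k => be (m k)) (Finset.mem_univ k)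
  rw [← Finset.sum_fiberwise_of_maps_to hmaps, V2]
  refine Finset.sum_le_sum fun β hβ => ?_
  have hsup := (Finset.mem_filter.1 hβ).2
  rw [Finset.mul_sum]
  calc _ = ∑ m ∈ ((Fintype.piFinset (fun k => range (n k))).filter (fun m => ∃ k, 2 ≤ m k)).filter
        (fun m => (fun k => be (m k)) = β),
        (∏ k, (n k : ℝ) ^ (if β k = 2 then 1 else β k)) * |mixedDiff d β θ m| := by
        refine Finset.sum_congr rfl fun m hm => ?_
        have hb := (Finset.mem_filter.1 hm).2
        rw [hb]
        congr 1
        refine Finset.prod_congr rfl fun k _ => ?_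
        congr 1
        have hbk : be (m k) = β k := congrFun hb k
        simp only [be] at hbk
        split_ifs with h <;> omega
    _ ≤ _ := by
        refine Finset.sum_le_sum_of_subset_of_nonneg ?_ fun _ _ _ => by positivity
        intro m hm
        obtain ⟨hm1, hb⟩ := Finset.mem_filter.1 hm
        have hm2 := Fintype.mem_piFinset.1 (Finset.mem_filter.1 hm1).1
        rw [idxBeta, hsup, Fintype.mem_piFinset]
        intro k
        have hbk : be (m k) = β k := congrFun hb k
        have := hm2 k
        simp only [be] at hbk
        simp only [Finset.mem_range] at this
        split_ifs with h
        · rw [Finset.mem_Ico]; omega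
        · rw [Finset.mem_singleton]; omega

lemma gg_ph (n m i : ℕ) (hn : 0 < n) : (n : ℝ) ^ (min m 1) * gg n m i = ph m i := by
  have hn' : (n : ℝ) ≠ 0 := by positivity
  unfold gg ph
  split_ifs with h
  · simp [h]
  · rw [show min m 1 = 1 by omega, pow_one, mul_div_cancel₀ _ hn']

lemma gg_bd (n m i : ℕ) (hi : i < n) : |gg n m i| ≤ 1 := by
  have hn' : (0 : ℝ) < n := by exact_mod_cast (by omega : 0 < n)
  unfold gg
  split_ifs with h
  · simp
  · rw [abs_of_nonneg (by positivity), div_le_one hn']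
    exact_mod_cast (by omega)

lemma ball_cov {E : Type*} [NormedAddCommGroup E] [InnerProductSpace ℝ E] (W : Submodule ℝ E)
    [FiniteDimensional ℝ W] (Q : ℕ) (hQ : 0 < Q) (hW : Module.finrank ℝ W ≤ Q) (R ε : ℝ)
    (hR : 0 ≤ R) (hε : 0 < ε) :
    Cov {x : E | x ∈ W ∧ ‖x‖ ≤ R} ε (Q * Real.log (5 + 2 * Q * R / ε)) := by
  classical
  set D := Module.finrank ℝ W
  let B := stdOrthonormalBasis ℝ W
  have hQ' : (0 : ℝ) < Q := by exact_mod_cast hQ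
  set h := ε / Q with hh
  have hh0 : 0 < h := by positivity
  set K : ℕ := ⌈R / h⌉₊ + 1 with hK
  let S : Finset (Fin D → ℤ) := Fintype.piFinset fun _ => Finset.Icc (-(K : ℤ)) K
  refine ⟨S.image (fun z => ∑ i, (h * (z i : ℝ)) • ((B i : W) : E)), ?_, ?_⟩
  · have h1 : ((2 * K + 1 : ℕ) : ℝ) ≤ 5 + 2 * Q * R / ε := by
      have := Nat.ceil_lt_add_one (show 0 ≤ R / h by positivity)
      have e : R / h = Q * R / ε := by rw [hh]; field_simp
      rw [hK]; push_cast
      rw [e] at this ⊢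
      have e2 : 2 * Q * R / ε = 2 * (Q * R / ε) := by ring
      rw [e2]; linarith
    have hpos : (1 : ℝ) ≤ 5 + 2 * Q * R / ε := by
      have : 0 ≤ 2 * Q * R / ε := by positivity
      linarith
    calc ((S.image _).card : ℝ) ≤ S.card := by exact_mod_cast Finset.card_image_le
      _ = ((2 * K + 1 : ℕ) : ℝ) ^ D := by
          simp only [S, Fintype.card_piFinset, Int.card_Icc, Finset.prod_const, Finset.card_univ,
            Fintype.card_fin]
          push_cast
          congr 1
          have : ((K : ℤ) + 1 - -(K : ℤ)).toNat = 2 * K + 1 := by omega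
          rw [this]; push_cast; rfl
      _ ≤ (5 + 2 * Q * R / ε) ^ D := by gcongr
      _ ≤ (5 + 2 * Q * R / ε) ^ Q := pow_le_pow_right₀ hpos hW
      _ = _ := by
          rw [← Real.log_pow, Real.exp_log (by positivity)]
  · rintro x ⟨hx, hxR⟩
    set w : W := ⟨x, hx⟩ with hw
    set a : Fin D → ℝ := fun i => inner ℝ (B i) w with ha
    have hwR : ‖w‖ ≤ R := hxR
    have haR : ∀ i, |a i| ≤ R := fun i => by
      have := abs_real_inner_le_norm (B i) w
      rw [B.orthonormal.1 i, one_mul] at this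
      exact this.trans hwR
    have hxs : x = ∑ i, a i • ((B i : W) : E) := by
      have := congrArg (fun y : W => (y : E)) (B.sum_repr' w)
      simp only [Submodule.coe_sum, Submodule.coe_smul] at this
      exact this.symm
    refine ⟨_, Finset.mem_image.2 ⟨fun i => ⌊a i / h⌋, ?_, rfl⟩, ?_⟩
    · simp only [S, Fintype.mem_piFinset, Finset.mem_Icc]
      intro i
      have h1 := abs_le.1 (haR i)
      have h2 : a i / h ≤ R / h := by gcongr; exact h1.2
      have h3 : -(R / h) ≤ a i / h := by rw [← neg_div]; gcongr; exact h1.1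
      have h4 := Nat.le_ceil (R / h)
      constructor
      · rw [Int.le_floor]; push_cast [hK]; linarith
      · have : (⌊a i / h⌋ : ℝ) ≤ (K : ℝ) := (Int.floor_le _).trans (by push_cast [hK]; linarith)
        exact_mod_cast this
    · rw [hxs, ← Finset.sum_sub_distrib]
      calc _ ≤ ∑ i : Fin D, h := by
            refine (norm_sum_le _ _).trans (Finset.sum_le_sum fun i _ => ?_)
            rw [← sub_smul, norm_smul]
            have : ‖((B i : W) : E)‖ = 1 := B.orthonormal.1 i
            rw [this, mul_one, Real.norm_eq_abs]
            have h1 := Int.floor_le (a i / h)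
            have h2 := Int.lt_floor_add_one (a i / h)
            have e : a i = h * (a i / h) := by field_simp
            rw [abs_le]
            constructor <;> nlinarith
        _ = D * h := by simp
        _ ≤ Q * h := by gcongr
        _ = ε := by rw [hh]; field_simp

end MARS
namespace MARS

lemma sum_prod_fin (d : ℕ) (n : Fin d → ℕ) (f : Fin d → ℕ → ℝ) :
    ∑ i : (∀ k : Fin d, Fin (n k)), ∏ k, f k (i k) = ∏ k, ∑ a ∈ range (n k), f k a := by
  have := Finset.prod_univ_sum (fun k : Fin d => (Finset.univ : Finset (Fin (n k))))
    (fun k a => f k a)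
  rw [Fintype.piFinset_univ] at this
  rw [← this]
  exact Finset.prod_congr rfl fun k _ => Fin.sum_univ_eq_sum_range (f k) (n k)

/-- tensor vector -/
noncomputable def tv (d : ℕ) (n : Fin d → ℕ) (f : Fin d → ℕ → ℝ) :
    EuclideanSpace ℝ (∀ k : Fin d, Fin (n k)) := WithLp.toLp 2 fun i => ∏ k, f k (i k)

lemma tv_norm (d : ℕ) (n : Fin d → ℕ) (f : Fin d → ℕ → ℝ) :
    ‖tv d n f‖ ^ 2 = ∏ k, ∑ a ∈ range (n k), f k a ^ 2 := by
  rw [EuclideanSpace.real_norm_sq_eq, ← sum_prod_fin]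
  refine Finset.sum_congr rfl fun i _ => ?_
  simp [tv, Finset.prod_pow]

lemma hull_cov (e : ℕ) (n : Fin (e + 1) → ℕ) (hn : ∀ k, 0 < n k) (W : ℝ) (hW : 0 ≤ W) (s0 : ℕ)
    (F : Finset (Fin (e + 1) → ℕ)) (hF : F ⊆ Fintype.piFinset fun k => range (n k)) :
    Cov {x : EuclideanSpace ℝ (∀ k, Fin (n k)) | ∃ b : (Fin (e + 1) → ℕ) → ℝ,
        ∑ m ∈ F, |b m| ≤ W ∧ x = ∑ m ∈ F, b m • tv (e + 1) n (fun k => gg (n k) (m k))}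
      (2 * 4 ^ (e + 1) * W * √(∏ k, (n k : ℝ)) * (1 / 4) ^ s0 * (2 * Kc e * (s0 + 1) ^ e))
      (12 * 2 ^ (e + 1) * ((e + 1 : ℕ) + 3) * 2 ^ s0 * (2 * Kc e * (s0 + 1) ^ e)) := by
  classical
  choose L ψ c A hc hA hrep hnorm using fun k => oneD (n k) (hn k)
  set P := Fintype.piFinset (fun k => range (L k + 1)) with hP
  let v : ∀ l : Fin (e + 1) → ℕ, (∀ k, Fin (2 ^ (l k + 1))) → EuclideanSpace ℝ (∀ k, Fin (n k)) :=
    fun l j => tv (e + 1) n (fun k => ψ k (l k) (j k))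
  let J : ∀ l : Fin (e + 1) → ℕ, (Fin (e + 1) → ℕ) → (∀ k, Fin (2 ^ (l k + 1))) :=
    fun l m k => ⟨A k (l k) (m k), hA k (l k) (m k)⟩
  have hblock := fun (l : Fin (e + 1) → ℕ) (hl : l ∈ P) =>
    block (e + 1) (∑ k, l k) s0 (ι := ∀ k, Fin (2 ^ (l k + 1)))
      (by
        rw [Fintype.card_pi]
        simp only [Fintype.card_fin]
        rw [Finset.prod_pow_eq_pow_sum, Finset.sum_add_distrib]; simp)
      F (J l) (v l) W (∏ k, (n k : ℝ)) hW (by positivity)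
      (by
        intro j
        rw [tv_norm]
        have hl' := Fintype.mem_piFinset.1 hl
        calc _ ≤ ∏ k, (16 * (n k : ℝ) / 8 ^ (l k)) := by
              refine Finset.prod_le_prod (fun k _ => Finset.sum_nonneg fun _ _ => sq_nonneg _)
                fun k _ => ?_
              refine hnorm k (l k) ?_ _
              have := hl' k
              simp at this; omega
          _ = _ := by
              rw [Finset.prod_div_distrib, Finset.prod_mul_distrib, Finset.prod_pow_eq_pow_sum]
              simp)
  refine (Cov.sum P _ _ _ hblock).mono ?_ ?_ ?_
  · rintro x ⟨b, hb, rfl⟩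
    refine ⟨fun l => ∑ m ∈ F, (b m * ∏ k, c k (l k) (m k)) • v l (J l m), ?_, ?_⟩
    · intro l _
      refine ⟨fun m => b m * ∏ k, c k (l k) (m k), le_trans (Finset.sum_le_sum fun m _ => ?_) hb,
        rfl⟩
      rw [abs_mul, Finset.abs_prod]
      exact mul_le_of_le_one_right (abs_nonneg _)
        (Finset.prod_le_one (fun _ _ => abs_nonneg _) fun k _ => hc k _ _)
    · rw [Finset.sum_comm]
      refine Finset.sum_congr rfl fun m hm => ?_
      have hm' := Fintype.mem_piFinset.1 (hF hm)
      ext i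
      simp only [PiLp.smul_apply, WithLp.ofLp_sum, Finset.sum_apply, smul_eq_mul, tv, v, J]
      rw [Finset.prod_congr rfl fun k _ => hrep k (m k) (by simpa using hm' k) (i k) (i k).2,
        Finset.prod_univ_sum, Finset.mul_sum]
      refine Finset.sum_congr rfl fun l _ => ?_
      rw [Finset.prod_mul_distrib]
      ring
  · rw [← Finset.mul_sum]
    gcongr
    refine le_trans (Finset.sum_le_sum fun l _ => ?_) (level_sum e s0 fun k => L k + 1)
    apply le_mul_of_one_le_right (by positivity)
    have : (0 : ℝ) ≤ (dd (∑ k, l k) s0 : ℕ) := by positivity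
    linarith
  · rw [← Finset.mul_sum]
    gcongr
    exact level_sum e s0 fun k => L k + 1

lemma choose_s0 (e : ℕ) (K : ℝ) (hK : 1 ≤ K) : ∃ C : ℝ, 0 < C ∧ ∀ x : ℝ, 0 < x → ∃ s0 : ℕ,
    K * (s0 + 1) ^ e * (1 / 4) ^ s0 * x ≤ 1 ∧
    2 ^ s0 * ((s0 : ℝ) + 1) ^ e ≤ C + C * ((2 : ℝ) ^ (e + 1) + 1 + 2 ^ (e + 1) * x) ^ ((1 : ℝ) / 2) *
      Real.log ((2 : ℝ) ^ (e + 1) + 1 + 2 ^ (e + 1) * x) ^ (3 * (2 * ((e + 1 : ℕ) : ℝ) - 1) / 4) := by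
  have hKc := Kc_nonneg e
  have hterm : ∀ p : ℕ, ((p : ℝ) + 1) ^ e ≤ Kc e * 2 ^ p := by
    intro p
    have h1 : (1 + (p : ℝ)) ^ (e + 1) * (1 / 2) ^ p ≤ Kc e :=
      (Kc_summable e).le_tsum p fun _ _ => by positivity
    have h2 : (1 + (p : ℝ)) ^ (e + 1) ≤ Kc e * 2 ^ p := by
      rwa [div_pow, one_pow, mul_one_div, div_le_iff₀ (by positivity)] at h1
    refine le_trans ?_ h2
    rw [add_comm]
    exact pow_le_pow_right₀ (by linarith [(Nat.cast_nonneg p : (0 : ℝ) ≤ p)]) (by omega)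
  set c3 := max (Real.log (K * Kc e)) 0 with hc3
  have hc30 : 0 ≤ c3 := le_max_right _ _
  set c1 := 2 * c3 + 3 with hc1
  have hc10 : 0 < c1 := by linarith
  set C := 1 + 2 ^ (e + 1) * √K * (√(c1 ^ e) * c1 ^ e) with hC
  have hC1 : 1 ≤ C := by
    rw [hC]; have : 0 ≤ 2 ^ (e + 1) * √K * (√(c1 ^ e) * c1 ^ e) := by positivity
    linarith
  refine ⟨C, by linarith, fun x hx => ?_⟩
  set Y := (2 : ℝ) ^ (e + 1) + 1 + 2 ^ (e + 1) * x with hY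
  have h2e : (2 : ℝ) ≤ 2 ^ (e + 1) := by
    calc (2 : ℝ) = 2 ^ 1 := by norm_num
      _ ≤ _ := pow_le_pow_right₀ (by norm_num) (by omega)
  have hYx : x ≤ Y := by nlinarith
  have hY3 : 3 ≤ Y := by nlinarith
  have hY0 : 0 < Y := by linarith
  set G := Real.log Y with hG
  have hG1 : 1 ≤ G := by
    rw [hG, Real.le_log_iff_exp_le hY0]
    have := Real.exp_one_lt_d9; linarith
  have hex : ∃ s0 : ℕ, K * (s0 + 1) ^ e * (1 / 4) ^ s0 * x ≤ 1 := by
    obtain ⟨s, hs⟩ := pow_unbounded_of_one_lt (K * Kc e * x) (by norm_num : (1 : ℝ) < 2)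
    refine ⟨s, ?_⟩
    calc K * (s + 1) ^ e * (1 / 4) ^ s * x ≤ K * (Kc e * 2 ^ s) * (1 / 4) ^ s * x := by
          gcongr; exact hterm s
      _ = (K * Kc e * x) * (2 * (1 / 4)) ^ s := by rw [mul_pow]; ring
      _ ≤ 2 ^ s * (2 * (1 / 4)) ^ s := by gcongr
      _ = 1 := by rw [← mul_pow]; norm_num
  classical
  refine ⟨Nat.find hex, Nat.find_spec hex, ?_⟩
  have hlast : 0 ≤ C * Y ^ ((1 : ℝ) / 2) * G ^ (3 * (2 * ((e + 1 : ℕ) : ℝ) - 1) / 4) := by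
    have : 0 ≤ G := by linarith
    positivity
  rcases hs0 : Nat.find hex with _ | p
  · have h00 : (2 : ℝ) ^ 0 * (((0 : ℕ) : ℝ) + 1) ^ e = 1 := by simp
    rw [h00]; linarith
  · have hp : 1 < K * ((p : ℝ) + 1) ^ e * (1 / 4) ^ p * x := by
      have := Nat.find_min hex (m := p) (by omega)
      exact not_le.1 this
    have hp4 : (4 : ℝ) ^ p ≤ K * ((p : ℝ) + 1) ^ e * Y := by
      have : (4 : ℝ) ^ p * 1 ≤ 4 ^ p * (K * ((p : ℝ) + 1) ^ e * (1 / 4) ^ p * x) := by gcongr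
      calc (4 : ℝ) ^ p = 4 ^ p * 1 := by ring
        _ ≤ _ := this
        _ = K * ((p : ℝ) + 1) ^ e * x * (4 * (1 / 4)) ^ p := by rw [mul_pow]; ring
        _ = K * ((p : ℝ) + 1) ^ e * x := by norm_num
        _ ≤ _ := by gcongr
    have hp2 : (2 : ℝ) ^ p ≤ K * Kc e * Y := by
      have h1 : (2 : ℝ) ^ p * 2 ^ p ≤ K * Kc e * Y * 2 ^ p := by
        calc (2 : ℝ) ^ p * 2 ^ p = 4 ^ p := by rw [← mul_pow]; norm_num
          _ ≤ _ := hp4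
          _ ≤ K * (Kc e * 2 ^ p) * Y := by gcongr; exact hterm p
          _ = _ := by ring
      exact le_of_mul_le_mul_right h1 (by positivity)
    have hKK : 0 < K * Kc e := by
      by_contra! hneg
      have : (0 : ℝ) < 2 ^ p := by positivity
      nlinarith
    have hpG : (p : ℝ) + 1 ≤ c1 * G := by
      have h1 := Real.log_le_log (by positivity) hp2
      rw [Real.log_pow, Real.log_mul hKK.ne' hY0.ne', ← hG] at h1
      have h2 : 1 / 2 ≤ Real.log 2 := by have := Real.log_two_gt_d9; linarith
      have h3 : (p : ℝ) * (1 / 2) ≤ p * Real.log 2 := by gcongr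
      have h4 : Real.log (K * Kc e) ≤ c3 := le_max_left _ _
      have h5 : c3 ≤ c3 * G := le_mul_of_one_le_right hc30 hG1
      rw [hc1]; linarith
    have hsq : (2 : ℝ) ^ p ≤ √K * √(((p : ℝ) + 1) ^ e) * √Y := by
      rw [← Real.sqrt_mul (by positivity), ← Real.sqrt_mul (by positivity)]
      apply Real.le_sqrt_of_sq_le
      refine le_trans (le_of_eq ?_) hp4
      rw [← pow_mul, mul_comm, pow_mul]; norm_num
    have hG0 : 0 < G := by linarith
    have hGe : √(G ^ e) * G ^ e ≤ G ^ (3 * (2 * ((e + 1 : ℕ) : ℝ) - 1) / 4) := by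
      rw [Real.sqrt_eq_rpow, ← Real.rpow_natCast, ← Real.rpow_mul hG0.le, ← Real.rpow_add hG0]
      apply Real.rpow_le_rpow_of_exponent_le hG1
      push_cast; linarith
    have hpe : ((p + 1 : ℕ) : ℝ) + 1 ≤ 2 * ((p : ℝ) + 1) := by push_cast; linarith [(Nat.cast_nonneg p : (0 : ℝ) ≤ p)]
    calc (2 : ℝ) ^ (p + 1) * (((p + 1 : ℕ) : ℝ) + 1) ^ e
        ≤ 2 ^ (p + 1) * (2 * ((p : ℝ) + 1)) ^ e := by gcongr
      _ = 2 ^ (e + 1) * (2 ^ p * ((p : ℝ) + 1) ^ e) := by rw [mul_pow]; ring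
      _ ≤ 2 ^ (e + 1) * ((√K * √(((p : ℝ) + 1) ^ e) * √Y) * ((p : ℝ) + 1) ^ e) := by gcongr
      _ ≤ 2 ^ (e + 1) * ((√K * √((c1 * G) ^ e) * √Y) * (c1 * G) ^ e) := by gcongr
      _ = (2 ^ (e + 1) * √K * (√(c1 ^ e) * c1 ^ e)) * √Y * (√(G ^ e) * G ^ e) := by
          rw [mul_pow, Real.sqrt_mul (by positivity)]; ring
      _ ≤ C * √Y * G ^ (3 * (2 * ((e + 1 : ℕ) : ℝ) - 1) / 4) := by
          gcongr
          rw [hC]; linarith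
      _ ≤ _ := by rw [Real.sqrt_eq_rpow]; linarith

lemma poly_log (Q t V M ε : ℝ) (hQ : 1 ≤ Q) (ht : 0 < t) (hV : 0 < V) (hM : 1 ≤ M) (hε : 0 < ε) :
    Real.log (5 + 2 * Q * (t + V * M) / (ε / 2)) ≤
      Real.log (5 * Q) + Real.log (2 + 2 * t * M / ε) + 2 * √(V * M / ε) := by
  set x := V * M / ε with hx
  have hx0 : 0 ≤ x := by positivity
  set y := t * M / ε with hy
  have hy0 : 0 ≤ y := by positivity
  have e1 : 2 * t * M / ε = 2 * y := by rw [hy]; ring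
  have e2 : 2 * Q * (t + V * M) / (ε / 2) ≤ 4 * Q * (y + x) := by
    have : t / ε ≤ y := by
      rw [hy]; gcongr; exact le_mul_of_one_le_right ht.le hM
    calc 2 * Q * (t + V * M) / (ε / 2) = 4 * Q * (t / ε + x) := by rw [hx]; field_simp; ring
      _ ≤ _ := by gcongr
  have h1 : 5 + 2 * Q * (t + V * M) / (ε / 2) ≤ 5 * Q * (2 + 2 * y) * (1 + √x) ^ 2 := by
    have hs := Real.sq_sqrt hx0
    have hs0 := Real.sqrt_nonneg x
    have : 1 + x ≤ (1 + √x) ^ 2 := by nlinarith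
    calc 5 + 2 * Q * (t + V * M) / (ε / 2) ≤ 5 + 4 * Q * (y + x) := by linarith
      _ ≤ 5 * Q * (2 + 2 * y) * (1 + x) := by
          have a1 : 0 ≤ Q * y := by positivity
          have a2 : 0 ≤ Q * x := by positivity
          have a3 : 0 ≤ Q * x * y := by positivity
          nlinarith
      _ ≤ _ := by gcongr
  rw [e1]
  have hp : 0 < 5 + 2 * Q * (t + V * M) / (ε / 2) := by positivity
  calc _ ≤ Real.log (5 * Q * (2 + 2 * y) * (1 + √x) ^ 2) := Real.log_le_log hp h1
    _ = Real.log (5 * Q) + Real.log (2 + 2 * y) + 2 * Real.log (1 + √x) := by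
        rw [Real.log_mul (by positivity) (by positivity), Real.log_mul (by positivity) (by positivity),
          Real.log_pow]; norm_num
    _ ≤ _ := by
        have := Real.log_le_sub_one_of_pos (show 0 < 1 + √x by positivity)
        linarith

end MARS
namespace MARS

lemma final_cov (e : ℕ) (n : Fin (e + 1) → ℕ) (hn : ∀ k, 2 ≤ n k) (V t ε : ℝ) (hV : 0 < V)
    (ht : 0 < t) (hε : 0 < ε) (s0 : ℕ)
    (hs : 2 * 4 ^ (e + 1) * V * √(∏ k, (n k : ℝ)) * (1 / 4) ^ s0 * (2 * Kc e * (s0 + 1) ^ e) ≤ ε / 2) :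
    Cov {x : EuclideanSpace ℝ (∀ k, Fin (n k)) |
        V2 (e + 1) n (latExtend (e + 1) n (fun i => x i)) ≤ V ∧ ‖x‖ ≤ t} ε
      (((2 ^ (e + 1) : ℕ) : ℝ) * Real.log (5 + 2 * (2 ^ (e + 1) : ℕ) *
          (t + V * √(∏ k, (n k : ℝ))) / (ε / 2)) +
        12 * 2 ^ (e + 1) * ((e + 1 : ℕ) + 3) * 2 ^ s0 * (2 * Kc e * (s0 + 1) ^ e)) := by
  classical
  have hn0 : ∀ k, 0 < n k := fun k => by have := hn k; omega
  set I := Fintype.piFinset fun k => range (n k) with hI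
  set F := I.filter (fun m => ∃ k, 2 ≤ m k) with hF
  set g : (Fin (e + 1) → ℕ) → EuclideanSpace ℝ (∀ k, Fin (n k)) :=
    fun m => tv (e + 1) n (fun k => gg (n k) (m k)) with hg
  set N := ∏ k, (n k : ℝ) with hN
  set Wp : Submodule ℝ (EuclideanSpace ℝ (∀ k, Fin (n k))) :=
    Submodule.span ℝ (Set.range fun m : Fin (e + 1) → Fin 2 => g (fun k => m k)) with hWp
  have hdim : Module.finrank ℝ Wp ≤ 2 ^ (e + 1) := by
    refine (finrank_range_le_card _).trans ?_
    simp
  have hgn : ∀ m, ‖g m‖ ≤ √N := by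
    intro m
    apply Real.le_sqrt_of_sq_le
    rw [hg, tv_norm]
    refine Finset.prod_le_prod (fun k _ => Finset.sum_nonneg fun _ _ => sq_nonneg _) fun k _ => ?_
    calc _ ≤ ∑ a ∈ range (n k), (1 : ℝ) := by
          refine Finset.sum_le_sum fun a ha => ?_
          rw [← sq_abs]
          exact pow_le_one₀ (abs_nonneg _) (gg_bd _ _ _ (by simpa using ha))
      _ = _ := by simp
  have h1 := ball_cov Wp (2 ^ (e + 1)) (by positivity) hdim (t + V * √N) (ε / 2) (by positivity)
    (by positivity)
  have h2 := hull_cov e n hn0 V hV.le s0 F (Finset.filter_subset _ _)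
  refine (h1.add h2).mono ?_ (by linarith) le_rfl
  rintro x ⟨hxV, hxt⟩
  set θ := latExtend (e + 1) n (fun i => x i) with hθ
  set b : (Fin (e + 1) → ℕ) → ℝ := fun m =>
    (∏ k, (n k : ℝ) ^ (min (m k) 1)) * mixedDiff (e + 1) (fun k => be (m k)) θ m with hb
  have hbV : ∑ m ∈ F, |b m| ≤ V := by
    refine le_trans (le_of_eq ?_) ((V2_ge (e + 1) n θ).trans hxV)
    refine Finset.sum_congr rfl fun m _ => ?_
    rw [hb, abs_mul, abs_of_nonneg (by positivity)]
  have hx : x = ∑ m ∈ I, b m • g m := by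
    ext i
    have h3 := repr (e + 1) n θ (fun k => (i k : ℕ)) (by
      rw [Fintype.mem_piFinset]; intro k; simp)
    have h4 : θ (fun k => (i k : ℕ)) = x i := by
      rw [hθ, latExtend, dif_pos (fun k => (i k).2)]
    rw [← h4, h3]
    simp only [PiLp.smul_apply, WithLp.ofLp_sum, Finset.sum_apply, smul_eq_mul, tv, hg, hb]
    refine Finset.sum_congr rfl fun m _ => ?_
    rw [Finset.prod_congr rfl fun k _ => (gg_ph (n k) (m k) (i k) (hn0 k)).symm,
      Finset.prod_mul_distrib]
    ring
  have hsplit : x = ∑ m ∈ I.filter (fun m => ¬ ∃ k, 2 ≤ m k), b m • g m + ∑ m ∈ F, b m • g m := by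
    have h7 := Finset.sum_filter_add_sum_filter_not I (fun m => ∃ k, 2 ≤ m k) (fun m => b m • g m)
    exact (hx.trans h7.symm).trans (add_comm _ _)
  refine ⟨_, ⟨?_, ?_⟩, ∑ m ∈ F, b m • g m, ⟨b, hbV, rfl⟩, hsplit⟩
  · refine Submodule.sum_mem _ fun m hm => Submodule.smul_mem _ _ (Submodule.subset_span ?_)
    have hm' := (Finset.mem_filter.1 hm).2
    push Not at hm'
    exact ⟨fun k => ⟨m k, hm' k⟩, rfl⟩
  · have h5 := hull_norm F b id g V (√N) hbV (Real.sqrt_nonneg _) hgn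
    have h6 : ∑ m ∈ I.filter (fun m => ¬ ∃ k, 2 ≤ m k), b m • g m = x - ∑ m ∈ F, b m • g m :=
      eq_sub_of_add_eq hsplit.symm
    rw [h6]
    refine (norm_sub_le _ _).trans ?_
    exact add_le_add hxt h5

end MARS

/-- Metric entropy bound for
`S(V,t) = {θ : V₂(θ) ≤ V, ‖θ‖₂ ≤ t}` in the Euclidean norm on `ℝ^{I₀}`. -/
theorem statement4 (d : ℕ) (hd : 1 ≤ d) :
    ∃ C : ℝ, 0 < C ∧
      ∀ n : Fin d → ℕ, (∀ k, 2 ≤ n k) →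
      ∀ V t ε : ℝ, 0 < V → 0 < t → 0 < ε →
      ∃ T : Finset ((∀ k : Fin d, Fin (n k)) → ℝ),
        IsNet eDist ε
          {θ : (∀ k : Fin d, Fin (n k)) → ℝ |
            V2 d n (latExtend d n θ) ≤ V ∧ Real.sqrt (∑ i, θ i ^ 2) ≤ t} T ∧
        Real.log T.card ≤
          Real.log (2 + 2 * t * (∏ k, (n k : ℝ)) ^ ((1 : ℝ) / 2) / ε) +
            ((2 : ℝ) ^ d - 1) *
              Real.log (2 + C * (t + V) * (∏ k, (n k : ℝ)) ^ ((1 : ℝ) / 2) / ε) +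
            C + C * (V * (∏ k, (n k : ℝ)) ^ ((1 : ℝ) / 2) / ε) ^ ((1 : ℝ) / 2) +
            C * ((2 : ℝ) ^ d + 1 +
                  (2 : ℝ) ^ d * V * (∏ k, (n k : ℝ)) ^ ((1 : ℝ) / 2) / ε) ^ ((1 : ℝ) / 2) *
              Real.log ((2 : ℝ) ^ d + 1 +
                  (2 : ℝ) ^ d * V * (∏ k, (n k : ℝ)) ^ ((1 : ℝ) / 2) / ε) ^
                (3 * (2 * (d : ℝ) - 1) / 4) := by
  obtain ⟨e, rfl⟩ : ∃ e, d = e + 1 := ⟨d - 1, by omega⟩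
  have hKc := MARS.Kc_nonneg e
  obtain ⟨C0, hC0, hs⟩ := MARS.choose_s0 e (8 * 4 ^ (e + 1) * MARS.Kc e + 1) (by
    have : 0 ≤ 8 * 4 ^ (e + 1) * MARS.Kc e := by positivity
    linarith)
  set Q : ℝ := 2 ^ (e + 1) with hQ
  have hQ1 : 1 ≤ Q := one_le_pow₀ (by norm_num)
  set B : ℝ := 12 * 2 ^ (e + 1) * ((e + 1 : ℕ) + 3) * (2 * MARS.Kc e) with hB
  have hB0 : 0 ≤ B := by positivity
  have hlQ : 0 ≤ Real.log (5 * Q) := Real.log_nonneg (by linarith)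
  set C : ℝ := 2 + Q * Real.log (5 * Q) + 2 * Q + B * C0 with hC
  have hBC : 0 ≤ B * C0 := by positivity
  have hQl : 0 ≤ Q * Real.log (5 * Q) := by positivity
  refine ⟨C, by positivity, fun n hn V t ε hV ht hε => ?_⟩
  set N := ∏ k, (n k : ℝ) with hN
  have hN1 : 1 ≤ N := by
    have : (1 : ℕ) ≤ ∏ k, n k := Finset.one_le_prod' fun k _ => by have := hn k; omega
    rw [hN]; exact_mod_cast this
  rw [← Real.sqrt_eq_rpow N]
  set M := √N with hM
  have hM1 : 1 ≤ M := by rw [hM, Real.one_le_sqrt]; exact hN1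
  set x := V * M / ε with hx
  have hx0 : 0 < x := by positivity
  obtain ⟨s0, hs1, hs2⟩ := hs x hx0
  have hcond : 2 * 4 ^ (e + 1) * V * M * (1 / 4) ^ s0 * (2 * MARS.Kc e * (s0 + 1) ^ e) ≤ ε / 2 := by
    have h1 : 8 * 4 ^ (e + 1) * MARS.Kc e * (s0 + 1) ^ e * (1 / 4) ^ s0 * x ≤ 1 := by
      refine le_trans ?_ hs1
      gcongr
      linarith
    have h2 : 2 * 4 ^ (e + 1) * V * M * (1 / 4) ^ s0 * (2 * MARS.Kc e * (s0 + 1) ^ e) =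
        (8 * 4 ^ (e + 1) * MARS.Kc e * (s0 + 1) ^ e * (1 / 4) ^ s0 * x) * (ε / 2) := by
      rw [hx]; field_simp; ring
    rw [h2]
    exact mul_le_of_le_one_left (by positivity) h1
  obtain ⟨T, hT1, hT2⟩ := MARS.final_cov e n hn V t ε hV ht hε s0 hcond
  rw [← hN, ← hM] at hT1
  have e1 : 2 ^ (e + 1) * V * M / ε = Q * x := by rw [hx, hQ]; ring
  have e2 : Q * V * M / ε = Q * x := by rw [hx]; ring
  rw [e2]
  set Z := (Q + 1 + Q * x) ^ ((1 : ℝ) / 2) *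
    Real.log (Q + 1 + Q * x) ^ (3 * (2 * ((e + 1 : ℕ) : ℝ) - 1) / 4) with hZ
  have hZ0 : 0 ≤ Z := by
    have : 0 ≤ Real.log (Q + 1 + Q * x) := Real.log_nonneg (by nlinarith)
    positivity
  have hpl := MARS.poly_log Q t V M ε hQ1 ht hV hM1 hε
  rw [← hx] at hpl
  have hC2 : 2 ≤ C := by rw [hC]; linarith
  have hlog : Real.log (2 + 2 * t * M / ε) ≤ Real.log (2 + C * (t + V) * M / ε) := by
    apply Real.log_le_log (by positivity)
    have : 2 * t ≤ C * (t + V) := by nlinarith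
    gcongr
  have hl0 : 0 ≤ Real.log (2 + 2 * t * M / ε) := by
    apply Real.log_nonneg
    have : 0 ≤ 2 * t * M / ε := by positivity
    linarith
  have hsx : 0 ≤ √x := Real.sqrt_nonneg _
  have hent : B * (2 ^ s0 * ((s0 : ℝ) + 1) ^ e) ≤ B * C0 + B * C0 * Z := by
    calc _ ≤ B * (C0 + C0 * Z) := by
          gcongr
          rw [hZ, ← mul_assoc]; exact hs2
      _ = _ := by ring
  have hrhs : Q * Real.log (5 + 2 * Q * (t + V * M) / (ε / 2)) +
        12 * 2 ^ (e + 1) * ((e + 1 : ℕ) + 3) * 2 ^ s0 * (2 * MARS.Kc e * (s0 + 1) ^ e) ≤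
      Real.log (2 + 2 * t * M / ε) + (Q - 1) * Real.log (2 + C * (t + V) * M / ε) + C +
        C * x ^ ((1 : ℝ) / 2) + C * (Q + 1 + Q * x) ^ ((1 : ℝ) / 2) *
          Real.log (Q + 1 + Q * x) ^ (3 * (2 * ((e + 1 : ℕ) : ℝ) - 1) / 4) := by
    rw [← Real.sqrt_eq_rpow x, mul_assoc C (_ ^ _), ← hZ]
    have a1 : Q * Real.log (5 + 2 * Q * (t + V * M) / (ε / 2)) ≤
        Q * (Real.log (5 * Q) + Real.log (2 + 2 * t * M / ε) + 2 * √x) := by gcongr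
    have a2 : (Q - 1) * Real.log (2 + 2 * t * M / ε) ≤
        (Q - 1) * Real.log (2 + C * (t + V) * M / ε) :=
      mul_le_mul_of_nonneg_left hlog (by linarith)
    have a3 : 2 * Q * √x ≤ C * √x := by gcongr; rw [hC]; linarith
    have a4 : B * C0 * Z ≤ C * Z := by gcongr; rw [hC]; linarith
    have a5 : 12 * 2 ^ (e + 1) * (((e + 1 : ℕ) : ℝ) + 3) * 2 ^ s0 * (2 * MARS.Kc e * (s0 + 1) ^ e) =
        B * (2 ^ s0 * ((s0 : ℝ) + 1) ^ e) := by rw [hB]; ring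
    rw [a5]
    have a6 : C = 2 + Q * Real.log (5 * Q) + 2 * Q + B * C0 := hC
    linarith
  have hcast : ((2 ^ (e + 1) : ℕ) : ℝ) = Q := by rw [hQ]; push_cast; rfl
  rw [hcast] at hT1
  classical
  refine ⟨T.image (fun y => fun i => y i), ?_, ?_⟩
  · rintro θ ⟨h1, h2⟩
    obtain ⟨y, hy, hd'⟩ := hT2 (WithLp.toLp 2 θ) ⟨h1, by
      rw [EuclideanSpace.norm_eq]; simpa using h2⟩
    refine ⟨_, Finset.mem_image.2 ⟨y, hy, rfl⟩, ?_⟩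
    rw [EuclideanSpace.norm_eq] at hd'
    simpa [eDist] using hd'
  · refine le_trans ?_ hrhs
    have hcard : (((T.image (fun y => fun i => y i)).card : ℕ) : ℝ) ≤ T.card := by
      exact_mod_cast Finset.card_image_le
    rcases Nat.eq_zero_or_pos (T.image (fun y => fun i => y i)).card with h0 | h0
    · rw [h0]
      simp only [Nat.cast_zero, Real.log_zero]
      have : 0 ≤ Real.log (5 + 2 * Q * (t + V * M) / (ε / 2)) := by
        apply Real.log_nonneg
        have : 0 ≤ 2 * Q * (t + V * M) / (ε / 2) := by positivity
        linarith
      positivity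
    · have := Real.log_le_log (by exact_mod_cast h0) (hcard.trans hT1)
      rwa [Real.log_exp] at this
end
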